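/- Let q be an even prime power with q ≥ 2048. Then every k-cap in PG(4, q) satisfies k < q³ − 2q² + 3q√q + 8q − 9√q − 6 (so m₂(4,q) < q³ − 2q² + 3q√q + 8q − 9√q − 6). -/

import Mathlib

open Module

/-- Points of the projective space `PG(n, q)` over the field `F` (with `q = |F|`). -/
abbrev PGPoint (F : Type*) [Field F] (n : ℕ) := Projectivization F (Fin (n + 1) → F)

/-- The set of projective points lying in the projective subspace determined by
a linear subspace `W`. -/
def ptsIn {F : Type*} [Field F] {n : ℕ} (W : Submodule F (Fin (n + 1) → F)) :
    Set (PGPoint F n) := {P | P.submodule ≤ W}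

/-- Three points of `PG(n, q)` are collinear if they lie on a common line. -/
def Coll3 {F : Type*} [Field F] {n : ℕ} (P₁ P₂ P₃ : PGPoint F n) : Prop :=
  Module.finrank F ↥(P₁.submodule ⊔ P₂.submodule ⊔ P₃.submodule) ≤ 2

/-- A cap (a plane arc when `n = 2`): a set of points no three of which are collinear. -/
def IsCap {F : Type*} [Field F] {n : ℕ} (K : Set (PGPoint F n)) : Prop :=
  ∀ P₁ ∈ K, ∀ P₂ ∈ K, ∀ P₃ ∈ K, P₁ ≠ P₂ → P₁ ≠ P₃ → P₂ ≠ P₃ → ¬ Coll3 P₁ P₂ P₃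

/-- A complete cap: a cap that is not contained in a cap with one more point. -/
def IsCompleteCap {F : Type*} [Field F] {n : ℕ} (K : Set (PGPoint F n)) : Prop :=
  IsCap K ∧ ∀ P ∉ K, ¬ IsCap (insert P K)

/-- A tangent line of `K`: a line (2-dimensional linear subspace) meeting `K`
in exactly one point. -/
def IsTangent {F : Type*} [Field F] {n : ℕ} (K : Set (PGPoint F n))
    (W : Submodule F (Fin (n + 1) → F)) : Prop :=
  Module.finrank F W = 2 ∧ (ptsIn W ∩ K).ncard = 1

/-!
A largest cap `K` may be assumed complete, so that every point off `K` lies on a secant. Project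
from a point `P` of `K`: the tangents of `K` at `P` become a set `T` of points of `PG(3, q)`, and
`|T| + |K| = q³ + q² + q + 2`. In even characteristic Segre's lemma of tangents, applied to the
planes through a secant, bounds the number of tangents through any point of that secant off `K` by
`|T|`. Summing this over the points of a tangent at `P` shows that `T` is concentrated on few lines
when seen from any of its own points. If `K` is large then `|T| < 3q²`, and such a set must fill
one or two planes of `PG(3, q)` up to `O(q)` points, so `P` lies on one or two hyperplanes meeting
`K` in `O(q)` points. Letting `P` vary, there are at least `6|K| / (5q)` hyperplanes this sparse,
more than the variance of the hyperplane section sizes of `K` permits. The argument needs `T ≠ ∅`;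
if `T` were empty then every hyperplane would meet `K` in `0` or `q² + q + 2` points, and counting
incidences would give `q² + q + 2 ∣ 4q`.
-/

section Bracket

variable {F : Type*} [Field F]

/-- The bracket `[a, b, c]` of three vectors of a three-dimensional space: their determinant, which
vanishes exactly when the corresponding points of the plane are collinear. -/
def bracket (a b c : Fin 3 → F) : F := Matrix.det (Matrix.of ![a, b, c])

theorem bracket_eq (a b c : Fin 3 → F) :
    bracket a b c = a 0 * (b 1 * c 2 - b 2 * c 1) - a 1 * (b 0 * c 2 - b 2 * c 0) +
      a 2 * (b 0 * c 1 - b 1 * c 0) := by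
  simp only [bracket, Matrix.det_fin_three, Matrix.of_apply, Matrix.cons_val]
  ring

theorem bracket_ne_zero_iff {a b c : Fin 3 → F} :
    bracket a b c ≠ 0 ↔ LinearIndependent F ![a, b, c] := by
  rw [bracket, ← isUnit_iff_ne_zero, ← Matrix.isUnit_iff_isUnit_det,
    ← Matrix.linearIndependent_rows_iff_isUnit]
  rfl

theorem bracket_pluecker (a x y b c : Fin 3 → F) :
    bracket a x b * bracket a y c - bracket a y b * bracket a x c =
      bracket a x y * bracket a b c := by
  simp only [bracket_eq]; ring

theorem bracket_anticomm (a b c : Fin 3 → F) : bracket a b c = -bracket a c b := by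
  simp only [bracket_eq]; ring

theorem bracket_self (a b : Fin 3 → F) : bracket a b b = 0 := by
  simp only [bracket_eq]; ring

theorem bracket_add_smul (a b c x : Fin 3 → F) (l : F) :
    bracket a (b + l • c) x = bracket a b x + l * bracket a c x := by
  simp only [bracket_eq, Pi.add_apply, Pi.smul_apply, smul_eq_mul]; ring

theorem bracket_smul_right (a b c : Fin 3 → F) (l : F) :
    bracket a b (l • c) = l * bracket a b c := by
  simp only [bracket_eq, Pi.smul_apply, smul_eq_mul]; ring

theorem bracket_combination_right (a b c : Fin 3 → F) (α β : F) :
    bracket a b (α • a + β • c) = β * bracket a b c := by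
  simp only [bracket_eq, Pi.add_apply, Pi.smul_apply, smul_eq_mul]; ring

-- `bracket a j w / bracket a Q j` is the affine coordinate of `j` on the pencil of lines through
-- `a`, with `Q` at infinity and `w` at the origin
theorem bracket_eq_mul_coordinate {a Q w j : Fin 3 → F} (hw : bracket a Q w = 1)
    (hj : bracket a Q j ≠ 0) (x : Fin 3 → F) :
    bracket a x j = bracket a Q j *
      (bracket a x Q * (bracket a j w / bracket a Q j) + bracket a x w) := by
  have hpl := bracket_pluecker a x j Q w
  rw [hw, bracket_anticomm a j Q] at hpl
  field_simp
  linear_combination -hpl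

theorem bracket_eq_mul_coordinate_sub {a Q w j u : Fin 3 → F} (hw : bracket a Q w = 1)
    (hj : bracket a Q j ≠ 0) (hu : bracket a Q u ≠ 0) :
    bracket a j u = bracket a Q j * bracket a Q u *
      (bracket a j w / bracket a Q j - bracket a u w / bracket a Q u) := by
  rw [bracket_eq_mul_coordinate hw hu, bracket_anticomm a j Q]
  field_simp
  ring

variable [CharP F 2]

theorem bracket_right_comm (a b c : Fin 3 → F) : bracket a b c = bracket a c b := by
  rw [bracket_anticomm, CharTwo.neg_eq]

theorem bracket_left_comm (a b c : Fin 3 → F) : bracket a b c = bracket b a c := by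
  rw [← CharTwo.neg_eq (bracket b a c)]
  simp only [bracket_eq]; ring

theorem bracket_swap (a b c : Fin 3 → F) : bracket a b c = bracket c b a := by
  rw [bracket_right_comm, bracket_left_comm, bracket_right_comm]

end Bracket

section Interpolation

variable {F : Type*} [Field F]

open Polynomial in
theorem prod_leadingCoeff_eq_sum_lagrange {ι κ : Type*} [DecidableEq ι] {E : Finset ι}
    {Λ : Finset κ} (hcard : E.card = Λ.card + 1) {y : ι → F} (hy : Set.InjOn y E) (α β : κ → F) :
    ∏ c ∈ Λ, α c = ∑ j ∈ E, (∏ c ∈ Λ, (α c * y j + β c)) / ∏ u ∈ E.erase j, (y j - y u) := by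
  have hlin : ∀ c ∈ Λ, (C (α c) * X + C (β c)).natDegree ≤ 1 := fun _ _ => natDegree_linear_le
  have hdeg : (∏ c ∈ Λ, (C (α c) * X + C (β c))).natDegree ≤ Λ.card :=
    (natDegree_prod_le _ _).trans ((Finset.sum_le_card_nsmul _ _ 1 hlin).trans_eq (by simp))
  have hlt : (∏ c ∈ Λ, (C (α c) * X + C (β c))).degree < (E.card : WithBot ℕ) :=
    degree_le_natDegree.trans_lt (Nat.cast_lt.mpr (by omega))
  have hlead := coeff_prod_of_natDegree_le _ _ 1 hlin
  have hcoeff := Lagrange.coeff_eq_sum hy hlt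
  rw [hcard, Nat.add_sub_cancel, ← mul_one Λ.card, hlead] at hcoeff
  simpa [eval_prod] using hcoeff

theorem prod_bracket_eq_sum_lagrange [DecidableEq (Fin 3 → F)] {a Q : Fin 3 → F}
    {E Λ : Finset (Fin 3 → F)} (hcard : E.card = Λ.card + 1) (hQ : ∀ j ∈ E, bracket a Q j ≠ 0)
    (hE : ∀ j ∈ E, ∀ u ∈ E, j ≠ u → bracket a j u ≠ 0) :
    ∏ c ∈ Λ, bracket a c Q = (∏ j ∈ E, bracket a Q j) *
      ∑ j ∈ E, (∏ c ∈ Λ, bracket a c j) /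
        (bracket a Q j * ∏ u ∈ E.erase j, bracket a j u) := by
  obtain ⟨j₀, hj₀⟩ : E.Nonempty := Finset.card_pos.mp (by omega)
  obtain ⟨w, hw⟩ : ∃ w, bracket a Q w = 1 :=
    ⟨(bracket a Q j₀)⁻¹ • j₀, by rw [bracket_smul_right, inv_mul_cancel₀ (hQ _ hj₀)]⟩
  set y : (Fin 3 → F) → F := fun j => bracket a j w / bracket a Q j
  have hdiff : ∀ j ∈ E, ∀ u ∈ E, bracket a j u = bracket a Q j * bracket a Q u * (y j - y u) :=
    fun j hj u hu => bracket_eq_mul_coordinate_sub hw (hQ j hj) (hQ u hu)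
  have hinj : Set.InjOn y E := fun j hj u hu hju => by
    by_contra hne
    exact hE j hj u hu hne (by rw [hdiff j hj u hu, hju, sub_self, mul_zero])
  rw [prod_leadingCoeff_eq_sum_lagrange hcard hinj _ (fun c => bracket a c w), Finset.mul_sum]
  refine Finset.sum_congr rfl fun j hj => ?_
  have hpow : ∏ c ∈ Λ, bracket a c j =
      bracket a Q j ^ Λ.card * ∏ c ∈ Λ, (bracket a c Q * y j + bracket a c w) := by
    rw [← Finset.prod_const, ← Finset.prod_mul_distrib]
    exact Finset.prod_congr rfl fun c _ => bracket_eq_mul_coordinate hw (hQ j hj) c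
  have hvandermonde : ∏ u ∈ E.erase j, bracket a j u = bracket a Q j ^ Λ.card *
      (∏ u ∈ E.erase j, bracket a Q u) * ∏ u ∈ E.erase j, (y j - y u) := by
    rw [show Λ.card = (E.erase j).card by rw [Finset.card_erase_of_mem hj]; omega,
      ← Finset.prod_const, ← Finset.prod_mul_distrib, ← Finset.prod_mul_distrib]
    exact Finset.prod_congr rfl fun u hu => hdiff j hj u (Finset.mem_of_mem_erase hu)
  have hrest : ∏ u ∈ E.erase j, bracket a Q u ≠ 0 :=
    Finset.prod_ne_zero_iff.mpr fun u hu => hQ u (Finset.mem_of_mem_erase hu)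
  have := hQ j hj
  rw [hpow, hvandermonde, ← Finset.mul_prod_erase E _ hj]
  field_simp
  simp only [mul_comm (y j)]

end Interpolation

section PlaneArc

open scoped Classical

variable {F : Type*} [Field F]

/-- An arc of the projective plane, given by vectors representing its points: no three of them
are linearly dependent. -/
def IsPlaneArc (S : Finset (Fin 3 → F)) : Prop :=
  ∀ a ∈ S, ∀ b ∈ S, ∀ c ∈ S, a ≠ b → a ≠ c → b ≠ c → bracket a b c ≠ 0

/-- `Λ` lists one direction for each tangent at `a` to the arc `S`: the line through `a` and `c`
with `c ∈ Λ` meets `S` only in `a`, and every line through `a` with that property arises from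
exactly one `c ∈ Λ`. -/
structure IsTangentSystem (S : Finset (Fin 3 → F)) (a : Fin 3 → F) (Λ : Finset (Fin 3 → F)) :
    Prop where
  bracket_ne_zero : ∀ c ∈ Λ, ∀ s ∈ S, s ≠ a → bracket a c s ≠ 0
  exists_bracket_eq_zero : ∀ x, (∀ s ∈ S, s ≠ a → bracket a x s ≠ 0) → ∃ c ∈ Λ, bracket a c x = 0
  eq_of_bracket_eq_zero : ∀ c ∈ Λ, ∀ d ∈ Λ, bracket a c d = 0 → c = d

variable {S : Finset (Fin 3 → F)} {a b b' : Fin 3 → F}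

theorem IsPlaneArc.card_secant_slopes [Fintype F] (hS : IsPlaneArc S) {u w : Fin 3 → F}
    (ha : a ∈ S) (hu : u ∈ S) (hw : w ∈ S) (hua : u ≠ a) (hwa : w ≠ a) (huw : u ≠ w) :
    (Finset.univ.filter fun l : F => ∀ s ∈ S, s ≠ a → bracket a (u + l • w) s ≠ 0).card + S.card =
      Fintype.card F + 2 := by
  have hauw : bracket a u w ≠ 0 := hS a ha u hu w hw hua.symm hwa.symm huw
  set slope : (Fin 3 → F) → F := fun s => -bracket a u s / bracket a w s with hslope
  have haws : ∀ s ∈ (S.erase a).erase w, bracket a w s ≠ 0 := fun s hs => by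
    simp only [Finset.mem_erase] at hs
    exact hS a ha w hw s hs.2.2 hwa.symm hs.2.1.symm hs.1.symm
  have hcompl : (Finset.univ.filter fun l : F => ∀ s ∈ S, s ≠ a → bracket a (u + l • w) s ≠ 0)ᶜ =
      ((S.erase a).erase w).image slope := by
    ext l
    simp only [Finset.mem_compl, Finset.mem_filter, Finset.mem_univ, true_and, Finset.mem_image,
      bracket_add_smul, not_forall, not_not, exists_prop]
    constructor
    · rintro ⟨s, hs, hsa, h⟩
      have hsw : s ≠ w := by
        rintro rfl
        rw [bracket_self, mul_zero, add_zero] at h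
        exact hauw h
      have hmem : s ∈ (S.erase a).erase w := by simp [hs, hsa, hsw]
      exact ⟨s, hmem, (div_eq_iff (haws s hmem)).mpr (by linear_combination -h)⟩
    · rintro ⟨s, hs, rfl⟩
      have := haws s hs
      simp only [Finset.mem_erase] at hs
      exact ⟨s, hs.2.2, hs.2.1, by simp only [hslope]; field_simp; ring⟩
  have hinj : Set.InjOn slope ((S.erase a).erase w) := by
    intro s hs t ht hst
    by_contra hne
    rw [hslope, div_eq_div_iff (haws s hs) (haws t ht)] at hst
    have hpl := bracket_pluecker a u w s t
    simp only [Finset.coe_erase, Set.mem_sdiff, Finset.mem_coe, Set.mem_singleton_iff] at hs ht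
    exact mul_ne_zero hauw (hS a ha s hs.1.1 t ht.1.1 (Ne.symm hs.1.2) (Ne.symm ht.1.2) hne)
      (by rw [← hpl]; linear_combination -hst)
  have hcard := Finset.card_add_card_compl
    (Finset.univ.filter fun l : F => ∀ s ∈ S, s ≠ a → bracket a (u + l • w) s ≠ 0)
  have htwo : 1 < S.card := Finset.one_lt_card.mpr ⟨a, ha, w, hw, hwa.symm⟩
  rw [hcompl, Finset.card_image_of_injOn hinj, Finset.card_erase_of_mem (by simp [hw, hwa]),
    Finset.card_erase_of_mem ha] at hcard
  omega

theorem IsPlaneArc.exists_isTangentSystem [Fintype F] (hS : IsPlaneArc S) (hthree : 3 ≤ S.card)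
    (ha : a ∈ S) : ∃ Λ, IsTangentSystem S a Λ ∧ Λ.card + S.card = Fintype.card F + 2 := by
  obtain ⟨u, hu, w, hw, huw⟩ : ∃ u ∈ S.erase a, ∃ w ∈ S.erase a, u ≠ w :=
    Finset.one_lt_card.mp (by rw [Finset.card_erase_of_mem ha]; omega)
  rw [Finset.mem_erase] at hu hw
  have hauw : bracket a u w ≠ 0 := hS a ha u hu.2 w hw.2 hu.1.symm hw.1.symm huw
  have hparallel : ∀ l m : F, bracket a (u + l • w) (u + m • w) = (m - l) * bracket a u w := by
    intro l m
    simp only [bracket_eq, Pi.add_apply, Pi.smul_apply, smul_eq_mul]; ring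
  have hinj : ∀ l m : F, bracket a (u + l • w) (u + m • w) = 0 → l = m := fun l m h => by
    rw [hparallel, mul_eq_zero, or_iff_left hauw, sub_eq_zero] at h
    exact h.symm
  refine ⟨(Finset.univ.filter fun l : F => ∀ s ∈ S, s ≠ a →
    bracket a (u + l • w) s ≠ 0).image fun l => u + l • w, ⟨?_, ?_, ?_⟩, ?_⟩
  · simp only [Finset.mem_image, Finset.mem_filter, Finset.mem_univ, true_and]
    rintro _ ⟨l, hl, rfl⟩
    exact hl
  · intro x hx
    have hxw : bracket a x w ≠ 0 := hx w hw.2 hw.1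
    -- the line through `a` and `x` meets the line through `u` and `w` in this point
    set l : F := -bracket a x u / bracket a x w with hl
    have hline : ∀ y, bracket a (u + l • w) y * bracket a x w = bracket a u w * bracket a x y := by
      intro y
      rw [bracket_add_smul, hl]
      field_simp
      simp only [bracket_eq]; ring
    refine ⟨u + l • w, Finset.mem_image_of_mem _ ?_, ?_⟩
    · simp only [Finset.mem_filter, Finset.mem_univ, true_and]
      intro s hs hsa h
      exact mul_ne_zero hauw (hx s hs hsa) (by rw [← hline, h, zero_mul])
    · have h := hline x
      rw [bracket_self, mul_zero] at h
      exact (mul_eq_zero.mp h).resolve_right hxw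
  · simp only [Finset.mem_image]
    rintro _ ⟨l, -, rfl⟩ _ ⟨m, -, rfl⟩ h
    rw [hinj l m h]
  · rw [Finset.card_image_of_injective _ fun l m h => hinj l m ?_]
    · exact hS.card_secant_slopes ha hu.2 hw.2 hu.1 hw.1 huw
    · rw [show u + m • w = u + l • w from h.symm, bracket_self]

theorem IsTangentSystem.prod_eq_zero {Λ : Finset (Fin 3 → F)} (hΛ : IsTangentSystem S a Λ)
    {Q : Fin 3 → F} (hQ : ∀ s ∈ S, s ≠ a → bracket a Q s ≠ 0) : ∏ c ∈ Λ, bracket a c Q = 0 :=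
  let ⟨_, hc, h⟩ := hΛ.exists_bracket_eq_zero Q hQ
  Finset.prod_eq_zero hc h

theorem prod_eq_one_of_injOn [Fintype F] [CharP F 2] {κ : Type*} {T : Finset κ} {g : κ → F}
    (hne : ∀ x ∈ T, g x ≠ 0) (hinj : Set.InjOn g T) (hcard : T.card + 1 = Fintype.card F) :
    ∏ x ∈ T, g x = 1 := by
  have himage : T.image g = Finset.univ.image (Units.val : Fˣ → F) := by
    apply Finset.eq_of_subset_of_card_le
    · intro y hy
      obtain ⟨x, hx, rfl⟩ := Finset.mem_image.mp hy
      exact Finset.mem_image.mpr ⟨Units.mk0 _ (hne x hx), Finset.mem_univ _, rfl⟩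
    · rw [Finset.card_image_of_injOn hinj, Finset.card_image_of_injective _ Units.val_injective,
        Finset.card_univ, Fintype.card_units]
      omega
  have hwilson := congrArg Units.val (FiniteField.prod_univ_units_id_eq_neg_one (K := F))
  rw [Units.coe_prod, Units.val_neg, Units.val_one, CharTwo.neg_eq] at hwilson
  calc ∏ x ∈ T, g x = ∏ y ∈ T.image g, y := by rw [Finset.prod_image hinj]
    _ = ∏ y ∈ Finset.univ.image (Units.val : Fˣ → F), y := by rw [himage]
    _ = ∏ u : Fˣ, (u : F) := Finset.prod_image Units.val_injective.injOn
    _ = 1 := hwilson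

/-- Segre's product of slopes: a full set of lines through `a`, apart from the two lines through
`b` and `b'`, has slopes running over all nonzero field elements. -/
theorem prod_bracket_eq_of_pencil [Fintype F] [CharP F 2] {D : Finset (Fin 3 → F)}
    (hab : bracket a b b' ≠ 0) (hb : ∀ x ∈ D, bracket a x b ≠ 0)
    (hb' : ∀ x ∈ D, bracket a x b' ≠ 0) (hD : ∀ x ∈ D, ∀ y ∈ D, bracket a x y = 0 → x = y)
    (hcard : D.card + 1 = Fintype.card F) :
    ∏ x ∈ D, bracket a x b = ∏ x ∈ D, bracket a x b' := by
  have hprod := prod_eq_one_of_injOn (g := fun x => bracket a x b / bracket a x b')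
    (fun x hx => div_ne_zero (hb x hx) (hb' x hx))
    (fun x hx y hy hxy => hD x hx y hy ?_) hcard
  · rwa [Finset.prod_div_distrib,
      div_eq_one_iff_eq (Finset.prod_ne_zero_iff.mpr hb')] at hprod
  · rw [div_eq_div_iff (hb' x hx) (hb' y hy)] at hxy
    have hpl := bracket_pluecker a x y b b'
    rw [hxy, sub_self] at hpl
    exact (mul_eq_zero.mp hpl.symm).resolve_right hab

theorem IsTangentSystem.bracket_ne_zero_of_mem_union {Λ R : Finset (Fin 3 → F)}
    (hS : IsPlaneArc S) (hΛ : IsTangentSystem S a Λ) (ha : a ∈ S) (hR : R ⊆ S.erase a)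
    {x : Fin 3 → F} (hx : x ∈ Λ ∪ R) (hb : b ∈ S) (hba : b ≠ a) (hbR : b ∉ R) :
    bracket a x b ≠ 0 := by
  rcases Finset.mem_union.mp hx with hx | hx
  · exact hΛ.bracket_ne_zero x hx b hb hba
  · obtain ⟨hxa, hxS⟩ := Finset.mem_erase.mp (hR hx)
    exact hS a ha x hxS b hb hxa.symm hba.symm (ne_of_mem_of_not_mem hx hbR)

theorem IsTangentSystem.eq_of_bracket_eq_zero_of_mem_union [CharP F 2]
    {Λ R : Finset (Fin 3 → F)} (hS : IsPlaneArc S) (hΛ : IsTangentSystem S a Λ) (ha : a ∈ S)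
    (hR : R ⊆ S.erase a) {x y : Fin 3 → F} (hx : x ∈ Λ ∪ R) (hy : y ∈ Λ ∪ R)
    (h : bracket a x y = 0) : x = y := by
  have hR' : ∀ {s}, s ∈ R → s ∈ S ∧ s ≠ a := fun hs => (Finset.mem_erase.mp (hR hs)).symm
  rcases Finset.mem_union.mp hx with hx | hx <;> rcases Finset.mem_union.mp hy with hy | hy
  · exact hΛ.eq_of_bracket_eq_zero x hx y hy h
  · exact absurd h (hΛ.bracket_ne_zero x hx y (hR' hy).1 (hR' hy).2)
  · exact absurd (bracket_right_comm a x y ▸ h) (hΛ.bracket_ne_zero y hy x (hR' hx).1 (hR' hx).2)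
  · by_contra hne
    exact hS a ha x (hR' hx).1 y (hR' hy).1 (hR' hx).2.symm (hR' hy).2.symm hne h

theorem IsTangentSystem.prod_mul_prod_eq [Fintype F] [CharP F 2] {Λ : Finset (Fin 3 → F)}
    (hS : IsPlaneArc S) (hΛ : IsTangentSystem S a Λ) (hcard : Λ.card + S.card = Fintype.card F + 2)
    (ha : a ∈ S) (hb : b ∈ S) (hb' : b' ∈ S) (hba : b ≠ a) (hba' : b' ≠ a) :
    (∏ c ∈ Λ, bracket a c b) * ∏ s ∈ (S.erase a).erase b, bracket a b s =
      (∏ c ∈ Λ, bracket a c b') * ∏ s ∈ (S.erase a).erase b', bracket a b' s := by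
  rcases eq_or_ne b b' with rfl | hbb
  · rfl
  have hbmem : b ∈ (S.erase a).erase b' := by simp [hb, hba, hbb]
  have hbmem' : b' ∈ (S.erase a).erase b := by simp [hb', hba', hbb.symm]
  set R := ((S.erase a).erase b).erase b' with hR
  have hRS : R ⊆ S.erase a := (Finset.erase_subset _ _).trans (Finset.erase_subset _ _)
  have hRcard : R.card + 3 = S.card := by
    rw [← Finset.card_erase_add_one ha,
      ← Finset.card_erase_add_one (Finset.mem_erase.mpr ⟨hba, hb⟩),
      ← Finset.card_erase_add_one hbmem']
  have hdisj : Disjoint Λ R := Finset.disjoint_left.mpr fun c hc hcR =>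
    have hcS := Finset.mem_erase.mp (hRS hcR)
    hΛ.bracket_ne_zero c hc c hcS.2 hcS.1 (bracket_self a c)
  have hpencil := prod_bracket_eq_of_pencil (a := a) (b := b) (b' := b') (D := Λ ∪ R)
    (hS a ha b hb b' hb' hba.symm hba'.symm hbb)
    (fun x hx => hΛ.bracket_ne_zero_of_mem_union hS ha hRS hx hb hba (by simp [hR]))
    (fun x hx => hΛ.bracket_ne_zero_of_mem_union hS ha hRS hx hb' hba' (by simp [hR]))
    (fun x hx y hy => hΛ.eq_of_bracket_eq_zero_of_mem_union hS ha hRS hx hy)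
    (by rw [Finset.card_union_of_disjoint hdisj]; omega)
  rw [Finset.prod_union hdisj, Finset.prod_union hdisj] at hpencil
  rw [← Finset.mul_prod_erase _ _ hbmem, ← Finset.mul_prod_erase _ _ hbmem',
    Finset.erase_right_comm (a := b'), bracket_right_comm a b b',
    Finset.prod_congr rfl fun s _ => bracket_right_comm a b s,
    Finset.prod_congr rfl fun s _ => bracket_right_comm a b' s]
  linear_combination bracket a b' b * hpencil

theorem sum_offDiag_eq_zero_of_symm [CharP F 2] {ι : Type*} [DecidableEq ι] {E : Finset ι}
    {g : ι → ι → F} (hg : ∀ i ∈ E, ∀ j ∈ E, g i j = g j i) :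
    ∑ i ∈ E, ∑ j ∈ E.erase i, g i j = 0 := by
  rw [Finset.sum_sigma']
  refine Finset.sum_involution (fun p _ => ⟨p.2, p.1⟩) ?_ ?_ ?_ ?_
  · intro p hp
    simp only [Finset.mem_sigma, Finset.mem_erase] at hp
    rw [hg _ hp.1 _ hp.2.2]
    exact CharTwo.add_self_eq_zero _
  · intro p hp _ heq
    simp only [Finset.mem_sigma, Finset.mem_erase] at hp
    exact hp.2.1 (congrArg Sigma.fst heq)
  · intro p hp
    simp only [Finset.mem_sigma, Finset.mem_erase] at hp ⊢
    exact ⟨hp.2.2, hp.2.1.symm, hp.1⟩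
  · intro _ _
    rfl

/-- The weight of the pair `i, j` when the product of the tangents at `i` is interpolated at `Q`
through the points of `E`; it is symmetric in `i` and `j` in characteristic two. -/
noncomputable def interpolationWeight (S E : Finset (Fin 3 → F)) (Q i j : Fin 3 → F) : F :=
  ((∏ s ∈ (S.erase i).erase j, bracket i j s) *
    (bracket i Q j * ∏ u ∈ (E.erase i).erase j, bracket i j u))⁻¹

theorem interpolationWeight_comm [CharP F 2] (S E : Finset (Fin 3 → F)) (Q i j : Fin 3 → F) :
    interpolationWeight S E Q i j = interpolationWeight S E Q j i := by
  simp only [interpolationWeight]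
  rw [Finset.erase_right_comm (s := S), Finset.erase_right_comm (s := E), bracket_swap i Q j]
  simp only [bracket_left_comm i j]

theorem IsTangentSystem.prod_bracket_eq [Fintype F] [CharP F 2] {E Λ : Finset (Fin 3 → F)}
    {Q : Fin 3 → F} (hS : IsPlaneArc S) (hΛ : IsTangentSystem S a Λ)
    (hcard : Λ.card + S.card = Fintype.card F + 2) (hES : E ⊆ S) (ha : a ∈ E)
    (hEcard : E.card = Λ.card + 2) (hQ : ∀ j ∈ E, j ≠ a → bracket a Q j ≠ 0)
    (hb : b ∈ S) (hba : b ≠ a) :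
    ∏ c ∈ Λ, bracket a c Q = (∏ j ∈ E.erase a, bracket a Q j) *
      (((∏ c ∈ Λ, bracket a c b) * ∏ s ∈ (S.erase a).erase b, bracket a b s) *
        ∑ j ∈ E.erase a, interpolationWeight S E Q a j) := by
  have hmem : ∀ j ∈ E.erase a, j ∈ S ∧ j ≠ a := fun j hj =>
    ⟨hES (Finset.mem_of_mem_erase hj), Finset.ne_of_mem_erase hj⟩
  rw [prod_bracket_eq_sum_lagrange (Q := Q) (E := E.erase a)
    (by rw [Finset.card_erase_of_mem ha]; omega)
    (fun j hj => hQ j (Finset.mem_of_mem_erase hj) (hmem j hj).2)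
    (fun j hj u hu hju => hS a (hES ha) j (hmem j hj).1 u (hmem u hu).1
      (hmem j hj).2.symm (hmem u hu).2.symm hju), Finset.mul_sum (E.erase a) _ (_ * _)]
  congr 1
  refine Finset.sum_congr rfl fun j hj => ?_
  obtain ⟨hjS, hja⟩ := hmem j hj
  have hsecants : ∏ s ∈ (S.erase a).erase j, bracket a j s ≠ 0 :=
    Finset.prod_ne_zero_iff.mpr fun s hs => by
      simp only [Finset.mem_erase] at hs
      exact hS a (hES ha) j hjS s hs.2.2 hja.symm hs.2.1.symm hs.1.symm
  rw [hΛ.prod_mul_prod_eq hS hcard (hES ha) hb hjS hba hja, interpolationWeight,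
    ← div_eq_mul_inv, mul_comm (∏ c ∈ Λ, bracket a c j), mul_div_mul_left _ _ hsecants]

theorem IsTangentSystem.prod_bracket_eq_zero_iff [Fintype F] [CharP F 2]
    {E Λ : Finset (Fin 3 → F)} {Q : Fin 3 → F} (hS : IsPlaneArc S) (hΛ : IsTangentSystem S a Λ)
    (hcard : Λ.card + S.card = Fintype.card F + 2) (hES : E ⊆ S) (ha : a ∈ E)
    (hEcard : E.card = Λ.card + 2) (hQ : ∀ j ∈ E, j ≠ a → bracket a Q j ≠ 0) :
    ∏ c ∈ Λ, bracket a c Q = 0 ↔ ∑ j ∈ E.erase a, interpolationWeight S E Q a j = 0 := by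
  obtain ⟨b, hb⟩ : (E.erase a).Nonempty :=
    Finset.card_pos.mp (by rw [Finset.card_erase_of_mem ha]; omega)
  obtain ⟨hba, hbE⟩ := Finset.mem_erase.mp hb
  have hlines : ∏ j ∈ E.erase a, bracket a Q j ≠ 0 := Finset.prod_ne_zero_iff.mpr fun j hj =>
    hQ j (Finset.mem_of_mem_erase hj) (Finset.ne_of_mem_erase hj)
  have htangents : ∏ c ∈ Λ, bracket a c b ≠ 0 := Finset.prod_ne_zero_iff.mpr fun c hc =>
    hΛ.bracket_ne_zero c hc b (hES hbE) hba
  have hsecants : ∏ s ∈ (S.erase a).erase b, bracket a b s ≠ 0 :=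
    Finset.prod_ne_zero_iff.mpr fun s hs => by
      simp only [Finset.mem_erase] at hs
      exact hS a (hES ha) b (hES hbE) s hs.2.2 hba.symm hs.2.1.symm hs.1.symm
  rw [hΛ.prod_bracket_eq hS hcard hES ha hEcard hQ (hES hbE) hba, mul_eq_zero,
    or_iff_right hlines, mul_eq_zero, or_iff_right (mul_ne_zero htangents hsecants)]

/-- In characteristic two the symmetric interpolation weights of all pairs of points of `insert a U`
add up to zero. The contribution of every point of `U` vanishes, hence so does that of `a`. -/
theorem IsTangentSystem.prod_bracket_eq_zero_of_tangents [Fintype F] [CharP F 2]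
    {U Λ : Finset (Fin 3 → F)} {Q : Fin 3 → F} (hS : IsPlaneArc S) (hΛ : IsTangentSystem S a Λ)
    (hcard : Λ.card + S.card = Fintype.card F + 2) (ha : a ∈ S) (hUS : U ⊆ S) (haU : a ∉ U)
    (hUcard : U.card = Λ.card + 1) (hU : ∀ i ∈ U, ∀ s ∈ S, s ≠ i → bracket i Q s ≠ 0) :
    ∏ c ∈ Λ, bracket a c Q = 0 := by
  set E := insert a U with hE
  have hES : E ⊆ S := Finset.insert_subset ha hUS
  have hEcard : E.card = Λ.card + 2 := by rw [hE, Finset.card_insert_of_notMem haU, hUcard]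
  have hEQ : ∀ i ∈ E, ∀ j ∈ E, j ≠ i → bracket i Q j ≠ 0 := by
    intro i hi j hj hji
    rcases Finset.mem_insert.mp hi with rfl | hi
    · rw [bracket_swap]
      exact hU j (Finset.mem_of_mem_insert_of_ne hj hji) i ha hji.symm
    · exact hU i hi j (hES hj) hji
  have hthree : 3 ≤ S.card := by
    have := Finset.card_le_card hES
    have := Fintype.one_lt_card (α := F)
    omega
  have hvanish : ∀ i ∈ U, ∑ j ∈ E.erase i, interpolationWeight S E Q i j = 0 := by
    intro i hi
    have hiE : i ∈ E := Finset.mem_insert_of_mem hi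
    obtain ⟨M, hM, hMcard⟩ := hS.exists_isTangentSystem hthree (hUS hi)
    rw [← hM.prod_bracket_eq_zero_iff hS hMcard hES hiE (by omega) (hEQ i hiE)]
    exact hM.prod_eq_zero (hU i hi)
  have hsum := sum_offDiag_eq_zero_of_symm (E := E) fun i _ j _ =>
    interpolationWeight_comm S E Q i j
  rw [hE, Finset.sum_insert haU, ← hE, Finset.sum_eq_zero hvanish, add_zero] at hsum
  have haE : a ∈ E := Finset.mem_insert_self a U
  exact (hΛ.prod_bracket_eq_zero_iff hS hcard hES haE hEcard (hEQ a haE)).mpr hsum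

theorem IsPlaneArc.card_tangent_add_card_le [Fintype F] [CharP F 2] (hS : IsPlaneArc S)
    {A A' Q : Fin 3 → F} (hA : A ∈ S) (hA' : A' ∈ S) (hAA' : A ≠ A') {α β : F} (hβ : β ≠ 0)
    (hQ : Q = α • A + β • A') {U : Finset (Fin 3 → F)} (hUS : U ⊆ S)
    (hU : ∀ R ∈ U, ∀ s ∈ S, s ≠ R → bracket R Q s ≠ 0) :
    U.card + S.card ≤ Fintype.card F + 2 := by
  have hline : bracket A Q A' = 0 := by
    rw [hQ, bracket_right_comm, bracket_combination_right, bracket_self, mul_zero]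
  have hAU : A ∉ U := fun h => hU A h A' hA' hAA'.symm hline
  have hAU' : A' ∉ U := fun h => hU A' h A hA hAA' (by rw [bracket_swap, hline])
  have hUcard : U.card + 2 ≤ S.card := by
    rw [← Finset.card_pair hAA', ← Finset.card_union_of_disjoint (by simp [hAU, hAU'])]
    refine Finset.card_le_card (Finset.union_subset hUS ?_)
    exact Finset.insert_subset hA (Finset.singleton_subset_iff.mpr hA')
  by_contra! hcon
  obtain ⟨Λ, hΛ, hΛcard⟩ := hS.exists_isTangentSystem (by omega) hA
  obtain ⟨E, hEU, hEcard⟩ := Finset.exists_subset_card_eq (show Λ.card + 1 ≤ U.card by omega)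
  refine Finset.prod_ne_zero_iff.mpr (fun c hc => ?_) <|
    hΛ.prod_bracket_eq_zero_of_tangents hS hΛcard hA (hEU.trans hUS) (fun h => hAU (hEU h)) hEcard
      fun i hi => hU i (hEU hi)
  rw [hQ, bracket_combination_right]
  exact mul_ne_zero hβ (hΛ.bracket_ne_zero c hc A' hA' hAA'.symm)

end PlaneArc

section PlanarSpace

/-- The points, lines and planes of a projective space of order `q` with point set `X`: the line
through two points (`line x x` carries no information) and the finite set of planes, with the
incidence axioms and line and plane sizes used in counting arguments. -/
structure PlanarSpace (X : Type*) [DecidableEq X] (q : ℕ) where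
  line : X → X → Finset X
  planes : Finset (Finset X)
  card_line : ∀ {x y}, x ≠ y → (line x y).card = q + 1
  left_mem_line : ∀ {x y}, x ≠ y → x ∈ line x y
  right_mem_line : ∀ {x y}, x ≠ y → y ∈ line x y
  line_eq : ∀ {x y z w}, x ≠ y → z ∈ line x y → w ∈ line x y → z ≠ w → line z w = line x y
  card_plane : ∀ {H}, H ∈ planes → H.card = q ^ 2 + q + 1
  line_subset : ∀ {H x y}, H ∈ planes → x ∈ H → y ∈ H → x ≠ y → line x y ⊆ H
  card_inter_le : ∀ {H H'}, H ∈ planes → H' ∈ planes → H ≠ H' → (H ∩ H').card ≤ q + 1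
  exists_plane : ∀ {x y z}, x ≠ y → z ∉ line x y → ∃ H ∈ planes, line x y ⊆ H ∧ z ∈ H

theorem sum_erase_eq_add_sum_sdiff {X M : Type*} [DecidableEq X] [AddCommMonoid M]
    {A : Finset X} {x : X} (T : Finset X) (hx : x ∈ A) (f : X → M) :
    ∑ y ∈ T.erase x, f y = ∑ y ∈ (A ∩ T).erase x, f y + ∑ y ∈ T \ A, f y := by
  rw [← Finset.sum_inter_add_sum_sdiff (T.erase x) A]
  congr 2
  · ext y; simp only [Finset.mem_inter, Finset.mem_erase]; tauto
  · ext y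
    simp only [Finset.mem_sdiff, Finset.mem_erase]
    exact ⟨fun h => ⟨h.1.2, h.2⟩, fun h => ⟨⟨fun hyx => h.2 (hyx ▸ hx), h.1⟩, h.2⟩⟩

theorem two_mul_sum_card_inter_add_le {X : Type*} [DecidableEq X] {lam : ℕ} {S : Finset (Finset X)}
    (T : Finset X) (hS : ∀ A ∈ S, ∀ B ∈ S, A ≠ B → (A ∩ B).card ≤ lam) :
    2 * ∑ A ∈ S, (A ∩ T).card + lam * S.card ≤
      2 * (S.biUnion fun A => A ∩ T).card + lam * S.card ^ 2 := by
  induction S using Finset.induction_on with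
  | empty => simp
  | insert A S hA ih =>
    have ih' := ih fun B hB C hC h =>
      hS B (Finset.mem_insert_of_mem hB) C (Finset.mem_insert_of_mem hC) h
    have hunion := Finset.card_union_add_card_inter (A ∩ T) (S.biUnion fun A => A ∩ T)
    have hoverlap : ((A ∩ T) ∩ S.biUnion fun A => A ∩ T).card ≤ S.card * lam := by
      rw [Finset.inter_biUnion]
      refine Finset.card_biUnion_le_card_mul _ _ _ fun B hB => ?_
      exact (Finset.card_le_card (Finset.inter_subset_inter Finset.inter_subset_left
        Finset.inter_subset_left)).trans (hS A (Finset.mem_insert_self _ _) B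
          (Finset.mem_insert_of_mem hB) fun h => hA (h ▸ hB))
    rw [Finset.sum_insert hA, Finset.biUnion_insert, Finset.card_insert_of_notMem hA]
    nlinarith

namespace PlanarSpace

variable {X : Type*} [DecidableEq X] {q : ℕ} (G : PlanarSpace X q) {T H : Finset X}
  {𝓗 : Finset (Finset X)} {x y z : X}

theorem line_eq_of_mem_left (hxy : x ≠ y) (hz : z ∈ G.line x y) (hxz : x ≠ z) :
    G.line x z = G.line x y :=
  G.line_eq hxy (G.left_mem_line hxy) hz hxz

theorem line_eq_of_mem_right (hxy : x ≠ y) (hz : z ∈ G.line x y) (hzy : z ≠ y) :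
    G.line z y = G.line x y :=
  G.line_eq hxy hz (G.right_mem_line hxy) hzy

theorem mem_line_comm (hxy : x ≠ y) (hxz : x ≠ z) : z ∈ G.line x y ↔ y ∈ G.line x z :=
  ⟨fun h => G.line_eq_of_mem_left hxy h hxz ▸ G.right_mem_line hxy,
    fun h => G.line_eq_of_mem_left hxz h hxy ▸ G.right_mem_line hxz⟩

theorem sum_card_line_inter_comm (A : Finset X) {D : Finset X} (hx : x ∉ D) :
    ∑ y ∈ A.erase x, (G.line x y ∩ D).card = ∑ z ∈ D, ((G.line x z ∩ A).erase x).card := by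
  have h := Finset.sum_card_bipartiteAbove_eq_sum_card_bipartiteBelow
    (s := A.erase x) (t := D) fun y z => z ∈ G.line x y
  refine (Finset.sum_congr rfl fun y _ => ?_).trans (h.trans (Finset.sum_congr rfl fun z hz => ?_))
  · rw [Finset.bipartiteAbove, Finset.inter_comm, Finset.filter_mem_eq_inter]
  · have hxz : x ≠ z := fun h => hx (h ▸ hz)
    congr 1
    ext v
    simp only [Finset.bipartiteBelow, Finset.mem_filter, Finset.mem_erase, Finset.mem_inter]
    constructor
    · rintro ⟨⟨hvx, hvA⟩, hz⟩
      exact ⟨hvx, (G.mem_line_comm hvx.symm hxz).mp hz, hvA⟩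
    · rintro ⟨hvx, hv, hvA⟩
      exact ⟨⟨hvx, hvA⟩, (G.mem_line_comm hxz hvx.symm).mp hv⟩

/-- The number of points of `T` other than `x` on the line through `x` and `y`. -/
def lineCount (T : Finset X) (x y : X) : ℕ := ((G.line x y ∩ T).erase x).card

theorem lineCount_le (T : Finset X) (hxy : x ≠ y) : G.lineCount T x y ≤ q := by
  have h : G.lineCount T x y ≤ ((G.line x y).erase x).card :=
    Finset.card_le_card (Finset.erase_subset_erase _ Finset.inter_subset_left)
  rwa [Finset.card_erase_of_mem (G.left_mem_line hxy), G.card_line hxy] at h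

theorem lineCount_add_one (hx : x ∈ T) (hxy : x ≠ y) :
    G.lineCount T x y + 1 = (G.line x y ∩ T).card :=
  Finset.card_erase_add_one (Finset.mem_inter.mpr ⟨G.left_mem_line hxy, hx⟩)

theorem lineCount_add_card_sdiff (hx : x ∈ T) (hxy : x ≠ y) :
    G.lineCount T x y + (G.line x y \ T).card = q := by
  have h := Finset.card_inter_add_card_sdiff (G.line x y) T
  rw [G.card_line hxy, ← G.lineCount_add_one hx hxy] at h
  omega

/-- A set `T` is saturated if seen from each of its points `x` it is concentrated on few lines:
the sum over `y ∈ T` of the number of points of `T` on the line `xy` is at least the number of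
points of the space outside `T`. -/
def IsSaturated (T : Finset X) : Prop :=
  ∀ x ∈ T, q ^ 3 + q ^ 2 + q + 1 ≤ T.card + ∑ y ∈ T.erase x, G.lineCount T x y

theorem IsSaturated.exists_rich_line {G : PlanarSpace X q} (hsat : G.IsSaturated T)
    (hT : T.card ≤ 3 * q ^ 2) (hx : x ∈ T) :
    ∃ y, x ≠ y ∧ q + 1 ≤ 3 * (G.line x y ∩ T).card := by
  by_contra! hcon
  have hsum : ∑ y ∈ T.erase x, (3 * G.lineCount T x y + 3) ≤ ∑ _y ∈ T.erase x, q :=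
    Finset.sum_le_sum fun y hy => by
      have hxy := (Finset.ne_of_mem_erase hy).symm
      have := hcon y hxy
      rw [← G.lineCount_add_one hx hxy] at this
      omega
  rw [Finset.sum_add_distrib, ← Finset.mul_sum] at hsum
  simp only [Finset.sum_const, smul_eq_mul] at hsum
  have hcard := Finset.card_erase_add_one hx
  have := hsat x hx
  nlinarith

theorem sum_lineCount_le_of_plane (hxy : x ≠ y) (hH : H ∈ G.planes) (hLH : G.line x y ⊆ H)
    (hzH : z ∈ H) (hzT : z ∈ T) (hzL : z ∉ G.line x y) :
    ∑ v ∈ G.line x y ∩ T, G.lineCount T v z ≤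
      (G.line x y ∩ T).card + ((H ∩ T) \ G.line x y).card := by
  have hne : ∀ v ∈ G.line x y, v ≠ z := fun v hv h => hzL (h ▸ hv)
  have hcount : ∀ v ∈ G.line x y ∩ T,
      G.lineCount T v z = 1 + (((G.line v z ∩ T).erase v).erase z).card := fun v hv => by
    have hvz := hne v (Finset.mem_inter.mp hv).1
    rw [lineCount, add_comm, Finset.card_erase_add_one]
    simp [hzT, hvz.symm, G.right_mem_line hvz]
  rw [Finset.sum_congr rfl hcount, Finset.sum_add_distrib, Finset.sum_const, smul_eq_mul, mul_one]
  gcongr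
  rw [← Finset.card_biUnion]
  · refine Finset.card_le_card fun w hw => ?_
    simp only [Finset.mem_biUnion, Finset.mem_erase, Finset.mem_inter, Finset.mem_sdiff] at hw ⊢
    obtain ⟨v, ⟨hvL, -⟩, -, hwv, hwl, hwT⟩ := hw
    have hvz := hne v hvL
    refine ⟨⟨G.line_subset hH (hLH hvL) hzH hvz hwl, hwT⟩, fun hwL => hzL ?_⟩
    rw [← G.line_eq hxy hvL hwL hwv.symm, G.line_eq_of_mem_left hvz hwl hwv.symm]
    exact G.right_mem_line hvz
  · intro v hv v' hv' hvv
    rw [Function.onFun, Finset.disjoint_left]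
    intro w hw hw'
    simp only [Finset.mem_erase, Finset.mem_inter] at hw hw'
    have hvz := hne v (Finset.mem_inter.mp hv).1
    have hvz' := hne v' (Finset.mem_inter.mp hv').1
    have hmem : v ∈ G.line v' z := by
      rw [← G.line_eq_of_mem_right hvz' hw'.2.2.1 hw'.1, G.line_eq_of_mem_right hvz hw.2.2.1 hw.1]
      exact G.left_mem_line hvz
    apply hzL
    rw [← G.line_eq hxy (Finset.mem_inter.mp hv').1 (Finset.mem_inter.mp hv).1 hvv.symm,
      G.line_eq_of_mem_left hvz' hmem hvv.symm]
    exact G.right_mem_line hvz'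

theorem IsSaturated.card_line_inter_mul_le {G : PlanarSpace X q} (hsat : G.IsSaturated T)
    (hxy : x ≠ y) :
    (G.line x y ∩ T).card * (q ^ 3 + q + 1) ≤ (G.line x y ∩ T).card * T.card +
      ∑ z ∈ T \ G.line x y, ∑ v ∈ G.line x y ∩ T, G.lineCount T v z := by
  rw [Finset.sum_comm, ← smul_eq_mul, ← smul_eq_mul, ← Finset.sum_const, ← Finset.sum_const,
    ← Finset.sum_add_distrib]
  refine Finset.sum_le_sum fun v hv => ?_
  have hsum := hsat v (Finset.mem_inter.mp hv).2
  rw [sum_erase_eq_add_sum_sdiff T (Finset.mem_inter.mp hv).1] at hsum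
  have hline : ∑ z ∈ (G.line x y ∩ T).erase v, G.lineCount T v z ≤ q * q := by
    refine (Finset.sum_le_card_nsmul _ _ q fun z hz =>
      G.lineCount_le T (Finset.ne_of_mem_erase hz).symm).trans ?_
    have hcard : (G.line x y ∩ T).card ≤ q + 1 :=
      G.card_line hxy ▸ Finset.card_le_card Finset.inter_subset_left
    rw [smul_eq_mul, Finset.card_erase_of_mem hv]
    exact Nat.mul_le_mul_right _ (by omega)
  nlinarith

/-- The planes containing at least `q² / 10` points of `T`. -/
def heavyPlanes (T : Finset X) : Finset (Finset X) :=
  G.planes.filter fun H => q ^ 2 ≤ 10 * (H ∩ T).card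

theorem IsSaturated.exists_mem_heavyPlanes {G : PlanarSpace X q} (hsat : G.IsSaturated T)
    (hT : T.card + 100 * q ≤ 3 * q ^ 2) (hx : x ∈ T) : ∃ H ∈ G.heavyPlanes T, x ∈ H := by
  obtain ⟨y, hxy, hrich⟩ := hsat.exists_rich_line (by omega) hx
  by_contra! hlight
  have hlight' : ∀ H ∈ G.planes, x ∈ H → 10 * (H ∩ T).card ≤ q ^ 2 := fun H hH hxH => by
    by_contra! h
    exact hlight H (Finset.mem_filter.mpr ⟨hH, h.le⟩) hxH
  have hT0 : 0 < T.card := Finset.card_pos.mpr ⟨x, hx⟩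
  set l := (G.line x y ∩ T).card with hl
  have hinner : ∀ z ∈ T \ G.line x y,
      10 * ∑ v ∈ G.line x y ∩ T, G.lineCount T v z ≤ 10 * l + q ^ 2 := by
    intro z hz
    rw [Finset.mem_sdiff] at hz
    obtain ⟨H, hH, hLH, hzH⟩ := G.exists_plane hxy hz.2
    have hsum := G.sum_lineCount_le_of_plane hxy hH hLH hzH hz.1 hz.2
    have hplane := hlight' H hH (hLH (G.left_mem_line hxy))
    have : ((H ∩ T) \ G.line x y).card ≤ (H ∩ T).card := Finset.card_le_card Finset.sdiff_subset
    omega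
  have houter : 10 * ∑ z ∈ T \ G.line x y, ∑ v ∈ G.line x y ∩ T, G.lineCount T v z ≤
      T.card * (10 * l + q ^ 2) := by
    rw [Finset.mul_sum]
    exact (Finset.sum_le_card_nsmul _ _ _ hinner).trans
      (Nat.mul_le_mul_right _ (Finset.card_le_card Finset.sdiff_subset))
  have hdouble := hsat.card_line_inter_mul_le hxy
  rw [← hl] at hdouble
  generalize ∑ z ∈ T \ G.line x y, ∑ v ∈ G.line x y ∩ T, G.lineCount T v z = s at houter hdouble
  clear_value l
  generalize T.card = n at *
  clear hinner hlight hlight'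
  have hq0 : 0 < q := Nat.pos_of_ne_zero fun h => by simp [h] at hT; omega
  zify at *
  have hupper : (l : ℤ) * (10 * ((q : ℤ) ^ 3 + q + 1 - 2 * n)) ≤ n * (q : ℤ) ^ 2 := by linarith
  have hlower : (q + 1 : ℤ) * (10 * ((q : ℤ) ^ 3 - 6 * q ^ 2 + 200 * q)) ≤
      3 * l * (10 * ((q : ℤ) ^ 3 + q + 1 - 2 * n)) := by
    have : (0 : ℤ) ≤ (q : ℤ) ^ 3 - 6 * q ^ 2 + 200 * q := by nlinarith
    exact mul_le_mul hrich (by linarith) (by linarith) (by positivity)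
  have hn : (n : ℤ) * (q : ℤ) ^ 2 ≤ (3 * (q : ℤ) ^ 2 - 100 * q) * (q : ℤ) ^ 2 :=
    mul_le_mul_of_nonneg_right (by linarith) (by positivity)
  nlinarith [hupper, hlower, hn, pow_pos hq0 2, pow_pos hq0 3]

theorem card_heavy_mul_add_le {m c : ℕ} (h𝓗 : 𝓗 ⊆ G.planes) (hm : m ≤ 𝓗.card)
    (hc : ∀ H ∈ 𝓗, c ≤ (H ∩ T).card) :
    2 * m * c + (q + 1) * m ≤ 2 * T.card + (q + 1) * m ^ 2 := by
  obtain ⟨S, hS, rfl⟩ := Finset.exists_subset_card_eq hm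
  have hoverlap := two_mul_sum_card_inter_add_le T fun A hA B hB hAB =>
    G.card_inter_le (h𝓗 (hS hA)) (h𝓗 (hS hB)) hAB
  have hunion : (S.biUnion fun H => H ∩ T).card ≤ T.card :=
    Finset.card_le_card (Finset.biUnion_subset.mpr fun _ _ => Finset.inter_subset_right)
  have hsum := Finset.card_nsmul_le_sum S (fun H => (H ∩ T).card) c fun H hH => hc H (hS hH)
  rw [smul_eq_mul] at hsum
  linarith

/-- The points of `H ∩ T` that lie on no plane of the family `𝓗` other than `H`. -/
def genericPoints (T : Finset X) (𝓗 : Finset (Finset X)) (H : Finset X) : Finset X :=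
  (H ∩ T).filter fun x => ∀ H' ∈ 𝓗, x ∈ H' → H' = H

theorem card_inter_add_le_card_genericPoints_add (h𝓗 : 𝓗 ⊆ G.planes) (hH : H ∈ 𝓗) :
    (H ∩ T).card + (q + 1) ≤ (genericPoints T 𝓗 H).card + 𝓗.card * (q + 1) := by
  have hsub : H ∩ T ⊆ genericPoints T 𝓗 H ∪ (𝓗.erase H).biUnion fun H' => H' ∩ H := by
    intro x hx
    simp only [genericPoints, Finset.mem_union, Finset.mem_filter, Finset.mem_biUnion,
      Finset.mem_erase, Finset.mem_inter]
    by_contra! hcon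
    obtain ⟨H', hH', hxH', hne⟩ := hcon.1 (Finset.mem_inter.mp hx)
    exact hcon.2 H' ⟨hne, hH'⟩ hxH' (Finset.mem_inter.mp hx).1
  have hmeet : ((𝓗.erase H).biUnion fun H' => H' ∩ H).card ≤ (𝓗.erase H).card * (q + 1) :=
    Finset.card_biUnion_le_card_mul _ _ _ fun H' hH' =>
      G.card_inter_le (h𝓗 (Finset.mem_of_mem_erase hH')) (h𝓗 hH) (Finset.ne_of_mem_erase hH')
  have := (Finset.card_le_card hsub).trans (Finset.card_union_le _ _)
  rw [← Finset.card_erase_add_one hH]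
  linarith

theorem lineCount_add_one_le_card (h𝓗 : 𝓗 ⊆ G.planes) (hcov : ∀ x ∈ T, ∃ H ∈ 𝓗, x ∈ H)
    (hH : H ∈ 𝓗) (hx : x ∈ genericPoints T 𝓗 H) (hy : y ∉ H) :
    G.lineCount T x y + 1 ≤ 𝓗.card := by
  simp only [genericPoints, Finset.mem_filter, Finset.mem_inter] at hx
  have hxy : x ≠ y := fun h => hy (h ▸ hx.1.1)
  choose! φ hφ hφ_mem using hcov
  have hmem : ∀ z ∈ (G.line x y ∩ T).erase x, z ≠ x ∧ z ∈ G.line x y ∧ z ∈ T := fun z hz => by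
    simpa only [Finset.mem_erase, Finset.mem_inter] using hz
  have hφ_ne : ∀ z ∈ (G.line x y ∩ T).erase x, φ z ≠ H := by
    intro z hz h
    obtain ⟨hzx, hzl, hzT⟩ := hmem z hz
    have hsub := G.line_subset (h𝓗 hH) hx.1.1 (h ▸ hφ_mem z hzT) hzx.symm
    rw [G.line_eq_of_mem_left hxy hzl hzx.symm] at hsub
    exact hy (hsub (G.right_mem_line hxy))
  rw [← Finset.card_erase_add_one hH]
  refine Nat.succ_le_succ (Finset.card_le_card_of_injOn φ (fun z hz => ?_) fun z hz w hw hzw => ?_)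
  · exact Finset.mem_erase.mpr ⟨hφ_ne z hz, hφ z (hmem z hz).2.2⟩
  · obtain ⟨-, hzl, hzT⟩ := hmem z hz
    obtain ⟨-, hwl, hwT⟩ := hmem w hw
    by_contra hne
    have hsub := G.line_subset (h𝓗 (hφ z hzT)) (hφ_mem z hzT) (hzw ▸ hφ_mem w hwT) hne
    rw [G.line_eq hxy hzl hwl hne] at hsub
    exact hφ_ne z hz (hx.2 _ (hφ z hzT) (hsub (G.left_mem_line hxy)))

theorem sum_lineCount_sdiff_add_le (h𝓗 : 𝓗 ⊆ G.planes) (hcov : ∀ x ∈ T, ∃ H ∈ 𝓗, x ∈ H)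
    (hH : H ∈ 𝓗) (hx : x ∈ genericPoints T 𝓗 H) :
    ∑ y ∈ T \ H, G.lineCount T x y + (T \ H).card ≤ (T \ H).card * 𝓗.card := by
  have h := Finset.sum_le_card_nsmul (T \ H) (fun y => G.lineCount T x y + 1) 𝓗.card
    fun y hy => G.lineCount_add_one_le_card h𝓗 hcov hH hx (Finset.mem_sdiff.mp hy).2
  simpa [Finset.sum_add_distrib] using h

theorem IsSaturated.le_sum_lineCount_plane {G : PlanarSpace X q} (hsat : G.IsSaturated T)
    (h𝓗 : 𝓗 ⊆ G.planes) (hcov : ∀ x ∈ T, ∃ H ∈ 𝓗, x ∈ H) (hH : H ∈ 𝓗)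
    (hx : x ∈ genericPoints T 𝓗 H) :
    q ^ 3 + q ^ 2 + q + 1 + (T \ H).card ≤
      T.card + ∑ y ∈ (H ∩ T).erase x, G.lineCount T x y + (T \ H).card * 𝓗.card := by
  have hxHT := Finset.mem_inter.mp (Finset.mem_filter.mp hx).1
  have hsum := hsat x hxHT.2
  rw [sum_erase_eq_add_sum_sdiff T hxHT.1] at hsum
  have := G.sum_lineCount_sdiff_add_le h𝓗 hcov hH hx
  omega

theorem sum_lineCount_plane_add (hH : H ∈ G.planes) (hx : x ∈ H ∩ T) :
    ∑ y ∈ (H ∩ T).erase x, G.lineCount T x y + q + 2 * q * (H \ T).card =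
      q * (q ^ 2 + q + 1) + ∑ z ∈ H \ T, (G.line x z ∩ (H \ T)).card := by
  obtain ⟨hxH, hxT⟩ := Finset.mem_inter.mp hx
  have hsub : ∀ {y}, y ∈ H → x ≠ y → G.line x y ⊆ H := fun hy => G.line_subset hH hxH hy
  have hout : ∀ {y}, y ∈ H → x ≠ y → G.line x y ∩ (H \ T) = G.line x y \ T := fun hy hxy => by
    rw [← Finset.inter_sdiff_assoc, Finset.inter_eq_left.mpr (hsub hy hxy)]
  have hcount : ∀ {y}, y ∈ H → x ≠ y →
      G.lineCount T x y + (G.line x y ∩ (H \ T)).card = q := fun hy hxy => by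
    rw [hout hy hxy, G.lineCount_add_card_sdiff hxT hxy]
  have hinner : ∑ y ∈ (H ∩ T).erase x, (G.lineCount T x y + (G.line x y ∩ (H \ T)).card) =
      ∑ _y ∈ (H ∩ T).erase x, q := Finset.sum_congr rfl fun y hy => by
    rw [Finset.mem_erase, Finset.mem_inter] at hy
    exact hcount hy.2.1 hy.1.symm
  have houter : ∑ z ∈ H \ T, (G.lineCount T x z + (G.line x z ∩ (H \ T)).card) =
      ∑ _z ∈ H \ T, q := Finset.sum_congr rfl fun z hz => by
    rw [Finset.mem_sdiff] at hz
    exact hcount hz.1 fun h => hz.2 (h ▸ hxT)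
  have hcomm : ∑ y ∈ (H ∩ T).erase x, (G.line x y ∩ (H \ T)).card =
      ∑ z ∈ H \ T, G.lineCount T x z := by
    rw [G.sum_card_line_inter_comm (H ∩ T) fun h => (Finset.mem_sdiff.mp h).2 hxT]
    refine Finset.sum_congr rfl fun z hz => ?_
    rw [Finset.mem_sdiff] at hz
    rw [lineCount, ← Finset.inter_assoc,
      Finset.inter_eq_left.mpr (hsub hz.1 fun h => hz.2 (h ▸ hxT))]
  rw [Finset.sum_add_distrib, hcomm] at hinner
  rw [Finset.sum_add_distrib] at houter
  simp only [Finset.sum_const, smul_eq_mul] at hinner houter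
  have hplane := Finset.card_inter_add_card_sdiff H T
  rw [G.card_plane hH, ← Finset.card_erase_add_one hx] at hplane
  rw [← hplane]
  linarith

theorem sum_sum_card_line_inter_le {A D : Finset X} (hAD : Disjoint A D) :
    ∑ x ∈ A, ∑ z ∈ D, (G.line x z ∩ D).card ≤ D.card * A.card + D.card ^ 2 * (q + 1) := by
  have hne : ∀ {x z}, x ∈ A → z ∈ D → x ≠ z := fun hx hz h =>
    Finset.disjoint_left.mp hAD hx (h ▸ hz)
  have hpoint : ∀ z ∈ D, ∑ x ∈ A, (G.line x z ∩ D).card ≤ A.card + D.card * (q + 1) := by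
    intro z hz
    have hsplit : ∀ x ∈ A, (G.line x z ∩ D).card =
        1 + ((D.erase z).filter fun w => w ∈ G.line x z).card := fun x hx => by
      have hzl : z ∈ G.line x z ∩ D := Finset.mem_inter.mpr ⟨G.right_mem_line (hne hx hz), hz⟩
      rw [← Finset.card_erase_add_one hzl, add_comm, Finset.filter_mem_eq_inter,
        Finset.erase_inter, Finset.inter_comm]
    have hdouble := Finset.sum_card_bipartiteAbove_eq_sum_card_bipartiteBelow
      (s := A) (t := D.erase z) fun x w => w ∈ G.line x z
    rw [Finset.sum_congr rfl hsplit, Finset.sum_add_distrib, Finset.sum_const, smul_eq_mul,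
      mul_one]
    refine Nat.add_le_add_left (hdouble.trans_le ?_) _
    refine (Finset.sum_le_card_nsmul _ _ (q + 1) fun w hw => ?_).trans
      (Nat.mul_le_mul_right _ (Finset.card_le_card (Finset.erase_subset _ _)))
    obtain ⟨hwz, -⟩ := Finset.mem_erase.mp hw
    rw [← G.card_line hwz]
    refine Finset.card_le_card fun x hx => ?_
    obtain ⟨hxA, hwl⟩ := Finset.mem_filter.mp hx
    rw [G.line_eq_of_mem_right (hne hxA hz) hwl hwz]
    exact G.left_mem_line (hne hxA hz)
  rw [Finset.sum_comm]
  refine (Finset.sum_le_card_nsmul _ _ _ hpoint).trans_eq ?_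
  rw [smul_eq_mul]
  ring

theorem IsSaturated.sq_add_le_card_inter_add {G : PlanarSpace X q}
    (hsat : G.IsSaturated T) (hT : T.card ≤ 3 * q ^ 2) (h𝓗 : 𝓗 ⊆ G.planes)
    (hcov : ∀ x ∈ T, ∃ H ∈ 𝓗, x ∈ H) (hH : H ∈ 𝓗) (hx : x ∈ genericPoints T 𝓗 H) :
    q ^ 2 + q ≤ (H ∩ T).card + 3 * 𝓗.card * q := by
  have hxHT := (Finset.mem_filter.mp hx).1
  have hinner : ∑ y ∈ (H ∩ T).erase x, G.lineCount T x y ≤ ((H ∩ T).erase x).card * q :=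
    Finset.sum_le_card_nsmul _ _ q fun y hy => G.lineCount_le T (Finset.ne_of_mem_erase hy).symm
  have hsum := hsat.le_sum_lineCount_plane h𝓗 hcov hH hx
  have hsplit := Finset.card_inter_add_card_sdiff T H
  rw [Finset.inter_comm, ← Finset.card_erase_add_one hxHT] at hsplit
  rw [← Finset.card_erase_add_one hxHT]
  obtain ⟨m, hm⟩ : ∃ m, 𝓗.card = m + 1 := ⟨_, (Finset.card_erase_add_one hH).symm⟩
  have houter : (T \ H).card * m ≤ 3 * q ^ 2 * m := Nat.mul_le_mul_right m (by omega)
  rw [hm] at hsum ⊢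
  by_contra! hlt
  nlinarith [Nat.mul_le_mul_right q (Nat.succ_le_of_lt hlt)]

theorem heavyPlanes_subset (T : Finset X) : G.heavyPlanes T ⊆ G.planes :=
  Finset.filter_subset _ _

theorem card_heavyPlanes_le (hq : 1024 ≤ q) (hT : T.card + 100 * q ≤ 3 * q ^ 2) :
    (G.heavyPlanes T).card ≤ 35 := by
  by_contra! hcon
  have := G.card_heavy_mul_add_le (T := T) (c := (q ^ 2 + 9) / 10) (G.heavyPlanes_subset T) hcon
    fun H hH => by have := (Finset.mem_filter.mp hH).2; omega
  have : q ^ 2 ≤ 10 * ((q ^ 2 + 9) / 10) := by omega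
  nlinarith

theorem exists_mem_genericPoints (hq : 1024 ≤ q) (hT : T.card + 100 * q ≤ 3 * q ^ 2)
    (hH : H ∈ G.heavyPlanes T) : ∃ x, x ∈ genericPoints T (G.heavyPlanes T) H := by
  refine Finset.card_pos.mp ?_
  have := G.card_inter_add_le_card_genericPoints_add (T := T) (G.heavyPlanes_subset T) hH
  have := Nat.mul_le_mul_right (q + 1) (G.card_heavyPlanes_le hq hT)
  nlinarith [(Finset.mem_filter.mp hH).2]

theorem IsSaturated.card_heavyPlanes_le_two {G : PlanarSpace X q} (hsat : G.IsSaturated T)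
    (hq : 1024 ≤ q) (hT : T.card + 100 * q ≤ 3 * q ^ 2) : (G.heavyPlanes T).card ≤ 2 := by
  have hcov : ∀ x ∈ T, ∃ H ∈ G.heavyPlanes T, x ∈ H := fun x hx => hsat.exists_mem_heavyPlanes hT hx
  have hbound : ∀ n, (G.heavyPlanes T).card ≤ n → ∀ H ∈ G.heavyPlanes T,
      q ^ 2 + q - 3 * n * q ≤ (H ∩ T).card := by
    intro n hn H hH
    obtain ⟨x, hx⟩ := G.exists_mem_genericPoints hq hT hH
    have := hsat.sq_add_le_card_inter_add (by omega) (G.heavyPlanes_subset T) hcov hH hx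
    have : 3 * (G.heavyPlanes T).card * q ≤ 3 * n * q := by gcongr
    omega
  have hthree : (G.heavyPlanes T).card ≤ 3 := by
    by_contra! hcon
    have := G.card_heavy_mul_add_le (G.heavyPlanes_subset T) hcon
      (hbound 35 (G.card_heavyPlanes_le hq hT))
    have : q ^ 2 ≤ (q ^ 2 + q - 3 * 35 * q) + 104 * q := by omega
    nlinarith
  by_contra! hcon
  have := G.card_heavy_mul_add_le (G.heavyPlanes_subset T) hcon (hbound 3 hthree)
  have : q ^ 2 ≤ (q ^ 2 + q - 3 * 3 * q) + 8 * q := by omega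
  nlinarith

theorem exists_genericPoint_sum_le (hq : 1024 ≤ q) (h𝓗 : 𝓗 ⊆ G.planes) (hcard : 𝓗.card ≤ 2)
    (hH : H ∈ 𝓗) (hHT : q ^ 2 ≤ (H ∩ T).card + 5 * q) :
    ∃ x ∈ genericPoints T 𝓗 H, ∑ z ∈ H \ T, (G.line x z ∩ (H \ T)).card ≤ 50 * q := by
  by_contra! hcon
  have hlower := Finset.card_nsmul_le_sum _ _ _ fun x hx => (hcon x hx).le
  have hupper := G.sum_sum_card_line_inter_le (A := genericPoints T 𝓗 H) (D := H \ T) <|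
    Finset.disjoint_left.mpr fun x hx hxD => (Finset.mem_sdiff.mp hxD).2
      (Finset.mem_inter.mp (Finset.mem_filter.mp hx).1).2
  have hplane := Finset.card_inter_add_card_sdiff H T
  rw [G.card_plane (h𝓗 hH)] at hplane
  have hgeneric : q ^ 2 ≤ (genericPoints T 𝓗 H).card + 6 * q + 1 := by
    have := G.card_inter_add_le_card_genericPoints_add (T := T) h𝓗 hH
    have := Nat.mul_le_mul_right (q + 1) hcard
    omega
  have hdiff : (H \ T).card ≤ 6 * q + 1 := by omega
  rw [smul_eq_mul] at hlower
  generalize (genericPoints T 𝓗 H).card = g at *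
  generalize (H \ T).card = d at *
  have hd : d * g ≤ (6 * q + 1) * g := by gcongr
  have hd_sq : d ^ 2 * (q + 1) ≤ (6 * q + 1) ^ 2 * (q + 1) := by gcongr
  have hg : 43 * q * (q ^ 2) ≤ 43 * q * (g + 6 * q + 1) := by gcongr
  nlinarith [Nat.mul_le_mul_right (q ^ 2) hq, Nat.mul_le_mul_right g hq, Nat.mul_le_mul_right q hq]

theorem card_sdiff_le_of_cover (h𝓗 : 𝓗 ⊆ G.planes) (hcov : ∀ x ∈ T, ∃ H ∈ 𝓗, x ∈ H) :
    (T \ H).card ≤ (𝓗.erase H).card * (q ^ 2 + q + 1) := by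
  refine (Finset.card_le_card fun x hx => ?_).trans <|
    Finset.card_biUnion_le_card_mul (𝓗.erase H) id _ fun H' hH' =>
      (G.card_plane (h𝓗 (Finset.mem_of_mem_erase hH'))).le
  rw [Finset.mem_sdiff] at hx
  obtain ⟨H', hH', hxH'⟩ := hcov x hx.1
  exact Finset.mem_biUnion.mpr ⟨H', Finset.mem_erase.mpr ⟨fun h => hx.2 (h ▸ hxH'), hH'⟩, hxH'⟩

theorem IsSaturated.two_mul_card_sdiff_le {G : PlanarSpace X q} (hsat : G.IsSaturated T)
    (hq : 1024 ≤ q) (hT : T.card ≤ 3 * q ^ 2) (h𝓗 : 𝓗 ⊆ G.planes)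
    (hcov : ∀ x ∈ T, ∃ H ∈ 𝓗, x ∈ H) (hcard : 𝓗.card ≤ 2) (hH : H ∈ 𝓗)
    (hgen : ∃ x, x ∈ genericPoints T 𝓗 H) :
    2 * q * (H \ T).card ≤ 𝓗.card * ((𝓗.card - 1) * (q ^ 2 + q + 1)) + q ^ 2 + 50 * q := by
  obtain ⟨x₀, hx₀⟩ := hgen
  have hHT : q ^ 2 ≤ (H ∩ T).card + 5 * q := by
    have := hsat.sq_add_le_card_inter_add hT h𝓗 hcov hH hx₀
    have := Nat.mul_le_mul_right q hcard
    linarith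
  obtain ⟨x, hx, hZ⟩ := G.exists_genericPoint_sum_le hq h𝓗 hcard hH hHT
  have hsum := hsat.le_sum_lineCount_plane h𝓗 hcov hH hx
  have hplane := G.sum_lineCount_plane_add (h𝓗 hH) (Finset.mem_filter.mp hx).1
  have hTcard : T.card ≤ (T \ H).card + (q ^ 2 + q + 1) := by
    have := Finset.le_card_sdiff H T
    rw [G.card_plane (h𝓗 hH)] at this
    omega
  have hTH := G.card_sdiff_le_of_cover (H := H) h𝓗 hcov
  rw [Finset.card_erase_of_mem hH] at hTH
  nlinarith [Nat.mul_le_mul_left 𝓗.card hTH]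

theorem IsSaturated.exists_almost_contained_planes {G : PlanarSpace X q}
    (hsat : G.IsSaturated T) (hq : 1024 ≤ q) (hne : T.Nonempty)
    (hT : T.card + 100 * q ≤ 3 * q ^ 2) :
    (∃ H ∈ G.planes, 5 * (H \ T).card ≤ 3 * q) ∨
      ∃ H ∈ G.planes, ∃ H' ∈ G.planes, H ≠ H' ∧
        5 * (H \ T).card ≤ 8 * q ∧ 5 * (H' \ T).card ≤ 8 * q := by
  have hcard := hsat.card_heavyPlanes_le_two hq hT
  have h𝓗 := G.heavyPlanes_subset T
  have hcov : ∀ x ∈ T, ∃ H ∈ G.heavyPlanes T, x ∈ H := fun x hx => hsat.exists_mem_heavyPlanes hT hx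
  have hdiff := fun H (hH : H ∈ G.heavyPlanes T) =>
    hsat.two_mul_card_sdiff_le hq (by omega) h𝓗 hcov hcard hH (G.exists_mem_genericPoints hq hT hH)
  obtain ⟨x, hx⟩ := hne
  obtain ⟨H, hH, -⟩ := hcov x hx
  have hpos : 0 < (G.heavyPlanes T).card := Finset.card_pos.mpr ⟨H, hH⟩
  interval_cases hn : (G.heavyPlanes T).card
  · refine Or.inl ⟨H, h𝓗 hH, ?_⟩
    have := hdiff H hH
    rw [Nat.sub_self, zero_mul, mul_zero, zero_add] at this
    nlinarith
  · obtain ⟨A, hA, B, hB, hAB⟩ := Finset.one_lt_card.mp (hn ▸ one_lt_two)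
    refine Or.inr ⟨A, h𝓗 hA, B, h𝓗 hB, hAB, ?_, ?_⟩
    · have := hdiff A hA
      nlinarith
    · have := hdiff B hB
      nlinarith

end PlanarSpace

end PlanarSpace

section Points

open scoped Classical LinearAlgebra.Projectivization

variable {F V : Type*} [Field F] [AddCommGroup V] [Module F V] {x y z w : ℙ F V}

theorem rep_mem_span_singleton_iff : x.rep ∈ Submodule.span F {y.rep} ↔ x = y := by
  rw [Submodule.mem_span_singleton]
  conv_rhs => rw [← x.mk_rep, ← y.mk_rep]
  rw [Projectivization.mk_eq_mk_iff']

theorem rep_mem_submodule_iff : x.rep ∈ y.submodule ↔ x = y := by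
  rw [y.submodule_eq, rep_mem_span_singleton_iff]

theorem submodule_le_iff {W : Submodule F V} : x.submodule ≤ W ↔ x.rep ∈ W := by
  rw [x.submodule_eq, Submodule.span_singleton_le_iff_mem]

theorem mk_rep_mem_iff {v : V} (hv : v ≠ 0) (W : Submodule F V) :
    (Projectivization.mk F v hv).rep ∈ W ↔ v ∈ W := by
  obtain ⟨a, ha⟩ := Projectivization.exists_smul_eq_mk_rep F v hv
  rw [← ha]
  exact W.smul_mem_iff_of_isUnit a.isUnit

/-- The line through two distinct points, as a subspace of `V`. -/
def lineThrough (x y : ℙ F V) : Submodule F V := Submodule.span F {x.rep, y.rep}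

theorem left_mem_lineThrough (x y : ℙ F V) : x.rep ∈ lineThrough x y :=
  Submodule.subset_span (Set.mem_insert _ _)

theorem right_mem_lineThrough (x y : ℙ F V) : y.rep ∈ lineThrough x y :=
  Submodule.subset_span (Set.mem_insert_of_mem _ rfl)

theorem lineThrough_comm (x y : ℙ F V) : lineThrough x y = lineThrough y x :=
  congrArg _ (Set.pair_comm _ _)

theorem lineThrough_le {W : Submodule F V} (hx : x.rep ∈ W) (hy : y.rep ∈ W) :
    lineThrough x y ≤ W :=
  Submodule.span_le.mpr (Set.pair_subset hx hy)

theorem finrank_lineThrough (h : x ≠ y) : finrank F (lineThrough x y) = 2 := by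
  have := finrank_span_eq_card (Projectivization.linearIndependent_pair_iff_ne.mpr h)
  rwa [Matrix.range_cons_cons_empty, Fintype.card_fin] at this

theorem linearIndependent_rep_iff_notMem_lineThrough (h : y ≠ z) :
    LinearIndependent F ![x.rep, y.rep, z.rep] ↔ x.rep ∉ lineThrough y z := by
  rw [show ![x.rep, y.rep, z.rep] = Fin.cons x.rep ![y.rep, z.rep] from rfl,
    linearIndependent_finCons, Matrix.range_cons_cons_empty, lineThrough]
  exact and_iff_right (Projectivization.linearIndependent_pair_iff_ne.mpr h)

theorem lineThrough_eq {L : Submodule F V} (hL : finrank F L = 2) (hx : x.rep ∈ L) (hy : y.rep ∈ L)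
    (h : x ≠ y) : lineThrough x y = L :=
  have : FiniteDimensional F L := FiniteDimensional.of_finrank_pos (by omega)
  Submodule.eq_of_le_of_finrank_eq (lineThrough_le hx hy) ((finrank_lineThrough h).trans hL.symm)

theorem rep_mem_lineThrough_rotate (hyz : y ≠ z) (hxy : x ≠ y) (h : x.rep ∈ lineThrough y z) :
    z.rep ∈ lineThrough x y := by
  rw [lineThrough_eq (finrank_lineThrough hyz) h (left_mem_lineThrough y z) hxy]
  exact right_mem_lineThrough y z

theorem finrank_sup_span_rep [FiniteDimensional F V] {W : Submodule F V} (hx : x.rep ∉ W) :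
    finrank F ↥(W ⊔ Submodule.span F {x.rep}) = finrank F W + 1 := by
  have h := Submodule.finrank_sup_add_finrank_inf_eq W (Submodule.span F {x.rep})
  rwa [(Submodule.disjoint_span_singleton' x.rep_nonzero).mpr hx |>.eq_bot, finrank_bot,
    finrank_span_singleton x.rep_nonzero, add_zero] at h

variable [Fintype F] [FiniteDimensional F V]

local notation "q" => Fintype.card F

noncomputable instance projectivizationFintype : Fintype (ℙ F V) :=
  have := Module.finite_of_finite F (M := V)
  Fintype.ofFinite _

/-- The points of the projective subspace with underlying linear subspace `W`. -/
noncomputable def points (W : Submodule F V) : Finset (ℙ F V) := {x | x.rep ∈ W}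

theorem mem_points {W : Submodule F V} : x ∈ points W ↔ x.rep ∈ W := by
  simp [points]

theorem card_projectivization {n : ℕ} (h : finrank F V = n) :
    Fintype.card (ℙ F V) = ∑ i ∈ Finset.range n, q ^ i := by
  rw [← Nat.card_eq_fintype_card, Projectivization.card_of_finrank F V h, Nat.card_eq_fintype_card]

theorem card_points {W : Submodule F V} {n : ℕ} (h : finrank F W = n) :
    (points W).card = ∑ i ∈ Finset.range n, q ^ i := by
  rw [← card_projectivization h, ← Finset.card_univ, ← Finset.card_image_of_injective Finset.univ
    (Projectivization.map_injective W.subtype W.injective_subtype)]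
  congr 1
  ext x
  rw [mem_points, Finset.mem_image]
  constructor
  · refine fun hx => ⟨.mk F ⟨x.rep, hx⟩ fun h => x.rep_nonzero (congrArg Subtype.val h),
      Finset.mem_univ _, ?_⟩
    rw [Projectivization.map_mk]
    exact x.mk_rep
  · rintro ⟨y, -, rfl⟩
    rw [← y.mk_rep, Projectivization.map_mk, mk_rep_mem_iff]
    exact y.rep.2

theorem card_points_lineThrough (h : x ≠ y) : (points (lineThrough x y)).card = q + 1 := by
  rw [card_points (finrank_lineThrough h)]
  simp [Finset.sum_range_succ, add_comm]

theorem card_points_inter_points_le {W W' : Submodule F V} (hW : finrank F W = 3)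
    (hW' : finrank F W' = 3) (hne : W ≠ W') : (points W ∩ points W').card ≤ q + 1 := by
  have hinf : finrank F ↥(W ⊓ W') ≤ 2 := by
    by_contra! h
    have h₁ := Submodule.eq_of_le_of_finrank_le (inf_le_left : W ⊓ W' ≤ W) (by omega)
    have h₂ := Submodule.eq_of_le_of_finrank_le (inf_le_right : W ⊓ W' ≤ W') (by omega)
    exact hne (h₁.symm.trans h₂)
  have hinter : points W ∩ points W' = points (W ⊓ W') := by
    ext x
    simp only [Finset.mem_inter, mem_points, Submodule.mem_inf]
  rw [hinter, card_points rfl]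
  refine (Finset.sum_le_sum_of_subset (Finset.range_mono hinf)).trans_eq ?_
  simp [Finset.sum_range_succ, add_comm]

/-- The points, lines and planes of the projective space of `V`. -/
noncomputable def planarSpace (F V : Type*) [Field F] [AddCommGroup V] [Module F V] [Fintype F]
    [FiniteDimensional F V] : PlanarSpace (ℙ F V) (Fintype.card F) where
  line x y := points (lineThrough x y)
  planes := {H | ∃ W : Submodule F V, finrank F W = 3 ∧ H = points W}
  card_line h := card_points_lineThrough h
  left_mem_line _ := mem_points.mpr (left_mem_lineThrough _ _)
  right_mem_line _ := mem_points.mpr (right_mem_lineThrough _ _)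
  line_eq hxy hz hw hzw := congrArg points <|
    lineThrough_eq (finrank_lineThrough hxy) (mem_points.mp hz) (mem_points.mp hw) hzw
  card_plane hH := by
    obtain ⟨W, hW, rfl⟩ := (Finset.mem_filter.mp hH).2
    rw [card_points hW]
    simp only [Finset.sum_range_succ, Finset.sum_range_zero]
    ring
  line_subset hH hx hy _ z hz := by
    obtain ⟨W, hW, rfl⟩ := (Finset.mem_filter.mp hH).2
    rw [mem_points] at *
    exact lineThrough_le hx hy hz
  card_inter_le hH hH' hne := by
    obtain ⟨W, hW, rfl⟩ := (Finset.mem_filter.mp hH).2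
    obtain ⟨W', hW', rfl⟩ := (Finset.mem_filter.mp hH').2
    exact card_points_inter_points_le hW hW' fun h => hne (h ▸ rfl)
  exists_plane {x y z} hxy hz := by
    refine ⟨points (lineThrough x y ⊔ Submodule.span F {z.rep}),
      Finset.mem_filter.mpr ⟨Finset.mem_univ _, _, ?_, rfl⟩, fun w hw => ?_, ?_⟩
    · rw [finrank_sup_span_rep (mem_points.not.mp hz), finrank_lineThrough hxy]
    · exact mem_points.mpr (Submodule.mem_sup_left (mem_points.mp hw))
    · exact mem_points.mpr (Submodule.mem_sup_right (Submodule.mem_span_singleton_self _))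

end Points

section Projection

open scoped LinearAlgebra.Projectivization

variable {F V : Type*} [Field F] [AddCommGroup V] [Module F V] {L : Submodule F V} {x : ℙ F V}
  {y z : ℙ F (V ⧸ L)}

/-- The join of the subspace `L` with a point of the quotient space: the subspace of dimension one
more that projects from `L` onto that point. -/
noncomputable def joinPoint (L : Submodule F V) (y : ℙ F (V ⧸ L)) : Submodule F V :=
  y.submodule.comap L.mkQ

theorem le_joinPoint (L : Submodule F V) (y : ℙ F (V ⧸ L)) : L ≤ joinPoint L y :=
  L.le_comap_mkQ _

theorem finrank_comap_mkQ [FiniteDimensional F V] (L : Submodule F V) (S : Submodule F (V ⧸ L)) :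
    finrank F (S.comap L.mkQ) = finrank F L + finrank F S := by
  have hmap : (S.comap L.mkQ).map L.mkQ = S :=
    Submodule.map_comap_eq_of_surjective L.mkQ_surjective S
  have hiso := (Submodule.quotientQuotientEquivQuotient L _ (L.le_comap_mkQ S)).finrank_eq
  rw [hmap] at hiso
  have h₁ := S.finrank_quotient_add_finrank
  have h₂ := L.finrank_quotient_add_finrank
  have h₃ := (S.comap L.mkQ).finrank_quotient_add_finrank
  omega

theorem finrank_joinPoint [FiniteDimensional F V] (L : Submodule F V) (y : ℙ F (V ⧸ L)) :
    finrank F (joinPoint L y) = finrank F L + 1 := by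
  rw [joinPoint, finrank_comap_mkQ, y.finrank_submodule]

theorem exists_rep_mem_joinPoint (hx : x.rep ∉ L) : ∃ y, x.rep ∈ joinPoint L y := by
  have h : L.mkQ x.rep ≠ 0 := by rwa [Submodule.mkQ_apply, Ne, Submodule.Quotient.mk_eq_zero]
  refine ⟨.mk F _ h, ?_⟩
  rw [joinPoint, Projectivization.submodule_mk]
  exact Submodule.mem_span_singleton_self _

theorem rep_mem_iff_of_rep_mem_joinPoint (hx : x.rep ∉ L) (hxy : x.rep ∈ joinPoint L y)
    {S : Submodule F (V ⧸ L)} : y.rep ∈ S ↔ x.rep ∈ S.comap L.mkQ := by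
  rw [joinPoint, Submodule.mem_comap, y.submodule_eq, Submodule.mem_span_singleton] at hxy
  obtain ⟨a, ha⟩ := hxy
  have ha₀ : a ≠ 0 := by
    rintro rfl
    rw [zero_smul, eq_comm, Submodule.mkQ_apply, Submodule.Quotient.mk_eq_zero] at ha
    exact hx ha
  rw [Submodule.mem_comap, ← ha, S.smul_mem_iff ha₀]

theorem joinPoint_unique (hx : x.rep ∉ L) (hy : x.rep ∈ joinPoint L y)
    (hz : x.rep ∈ joinPoint L z) : y = z :=
  rep_mem_submodule_iff.mp ((rep_mem_iff_of_rep_mem_joinPoint hx hy).mpr hz)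

theorem sum_card_inter_joinPoint [Fintype F] [FiniteDimensional F V] [DecidableEq (ℙ F V)]
    {T : Finset (ℙ F V)} (hT : ∀ x ∈ T, x.rep ∉ L) :
    ∑ y, (T ∩ points (joinPoint L y)).card = T.card := by
  rw [← Finset.card_biUnion]
  · congr 1
    ext x
    simp only [Finset.mem_biUnion, Finset.mem_univ, true_and, Finset.mem_inter, mem_points,
      exists_and_left, and_iff_left_iff_imp]
    exact fun hx => exists_rep_mem_joinPoint (hT x hx)
  · refine fun y _ z _ hyz => Finset.disjoint_left.mpr fun x hxy hxz => hyz ?_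
    rw [Finset.mem_inter, mem_points] at hxy hxz
    exact joinPoint_unique (hT x hxy.1) hxy.2 hxz.2

end Projection

section Tangents

open scoped Classical LinearAlgebra.Projectivization

variable {F V : Type*} [Field F] [AddCommGroup V] [Module F V] {K : Finset (ℙ F V)}
  {W : Submodule F V} {x y z A A' Q : ℙ F V}

local notation "q" => Fintype.card F

/-- A finite cap in the projective space of `V`. -/
def NoThreeCollinear (K : Finset (ℙ F V)) : Prop :=
  ∀ x ∈ K, ∀ y ∈ K, ∀ z ∈ K, x ≠ y → x ≠ z → y ≠ z → x.rep ∉ lineThrough y z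

/-- Completeness of a cap: every further point lies on a secant. -/
def SecantsCover (K : Finset (ℙ F V)) : Prop :=
  ∀ Q ∉ K, ∃ A ∈ K, ∃ A' ∈ K, A ≠ A' ∧ Q.rep ∈ lineThrough A A'

theorem secantsCover_of_maximal (hK : Maximal NoThreeCollinear K) : SecantsCover K := by
  classical
  intro Q hQ
  have hinsert : ¬ NoThreeCollinear (insert Q K) :=
    hK.not_prop_of_gt (Finset.ssubset_insert hQ)
  simp only [NoThreeCollinear, not_forall, not_not] at hinsert
  obtain ⟨x, hx, y, hy, z, hz, hxy, hxz, hyz, hmem⟩ := hinsert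
  have hinK : ∀ {w}, w ∈ insert Q K → w ≠ Q → w ∈ K := Finset.mem_of_mem_insert_of_ne
  obtain rfl | hxQ := eq_or_ne x Q
  · exact ⟨y, hinK hy hxy.symm, z, hinK hz hxz.symm, hyz, hmem⟩
  obtain rfl | hyQ := eq_or_ne y Q
  · refine ⟨z, hinK hz hyz.symm, x, hinK hx hxy, hxz.symm, ?_⟩
    rw [lineThrough_comm] at hmem
    exact lineThrough_comm x z ▸ rep_mem_lineThrough_rotate hyz.symm hxz hmem
  obtain rfl | hzQ := eq_or_ne z Q
  · exact ⟨x, hinK hx hxz, y, hinK hy hyz, hxy, rep_mem_lineThrough_rotate hyz hxy hmem⟩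
  · exact absurd hmem (hK.prop x (hinK hx hxQ) y (hinK hy hyQ) z (hinK hz hzQ) hxy hxz hyz)

/-- The points of `K` whose join with the external point `Q` is a tangent of `K`. -/
noncomputable def tangentPoints (K : Finset (ℙ F V)) (Q : ℙ F V) : Finset (ℙ F V) :=
  {R ∈ K | ∀ S ∈ K, S ≠ R → S.rep ∉ lineThrough Q R}

theorem mem_tangentPoints :
    x ∈ tangentPoints K Q ↔ x ∈ K ∧ ∀ S ∈ K, S ≠ x → S.rep ∉ lineThrough Q x :=
  Finset.mem_filter

theorem tangentPoints_subset (K : Finset (ℙ F V)) (Q : ℙ F V) : tangentPoints K Q ⊆ K :=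
  fun _ hx => (mem_tangentPoints.mp hx).1

theorem bracket_ne_zero_of_notMem_lineThrough {f : V →ₗ[F] Fin 3 → F} (hf : Set.InjOn f W)
    (hx : x.rep ∈ W) (hy : y.rep ∈ W) (hz : z.rep ∈ W) (hyz : y ≠ z)
    (h : x.rep ∉ lineThrough y z) : bracket (f x.rep) (f y.rep) (f z.rep) ≠ 0 := by
  have hle : Submodule.span F (Set.range ![x.rep, y.rep, z.rep]) ≤ W := by
    simp [Submodule.span_le, Matrix.range_cons, Set.insert_subset_iff, hx, hy, hz]
  have hli := ((linearIndependent_rep_iff_notMem_lineThrough hyz).mpr h).map_injOn f (hf.mono hle)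
  rw [bracket_ne_zero_iff]
  convert hli using 1
  simp [← List.ofFn_inj]

theorem exists_injOn_of_finrank_eq [FiniteDimensional F V] {n : ℕ} (hW : finrank F W = n) :
    ∃ f : V →ₗ[F] Fin n → F, Set.InjOn f W := by
  let e : W ≃ₗ[F] Fin n → F := LinearEquiv.ofFinrankEq _ _ (by simpa using hW)
  obtain ⟨f, hf⟩ := e.toLinearMap.exists_extend
  have hfe : ∀ w : W, f w = e w := LinearMap.congr_fun hf
  refine ⟨f, fun v hv w hw h => congrArg Subtype.val (a₁ := ⟨v, hv⟩) (a₂ := ⟨w, hw⟩) <|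
    e.injective ?_⟩
  rw [← hfe, ← hfe]
  exact h

theorem injOn_comp_rep {f : V →ₗ[F] Fin 3 → F} (hf : Set.InjOn f W) :
    Set.InjOn (fun x : ℙ F V => f x.rep) {x | x.rep ∈ W} := fun x hx y hy h => by
  rw [← x.mk_rep, ← y.mk_rep]
  simp only [hf hx hy h]

theorem NoThreeCollinear.isPlaneArc_image [Fintype F] [FiniteDimensional F V]
    (hK : NoThreeCollinear K) {f : V →ₗ[F] Fin 3 → F} (hf : Set.InjOn f W) :
    IsPlaneArc ((K ∩ points W).image fun x => f x.rep) := by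
  simp only [IsPlaneArc, Finset.forall_mem_image, Finset.mem_inter, mem_points]
  rintro a ⟨haK, haW⟩ b ⟨hbK, hbW⟩ c ⟨hcK, hcW⟩ hab hac hbc
  have hbc' : b ≠ c := by rintro rfl; exact hbc rfl
  refine bracket_ne_zero_of_notMem_lineThrough hf haW hbW hcW hbc' <|
    hK a haK b hbK c hcK ?_ ?_ hbc'
  · rintro rfl; exact hab rfl
  · rintro rfl; exact hac rfl

theorem NoThreeCollinear.card_tangentPoints_inter_plane_le [Fintype F] [FiniteDimensional F V]
    [CharP F 2] (hK : NoThreeCollinear K) (hA : A ∈ K) (hA' : A' ∈ K) (hAA' : A ≠ A')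
    (hQ : Q.rep ∈ lineThrough A A') (hQK : Q ∉ K) (hW : finrank F W = 3)
    (hAW : lineThrough A A' ≤ W) :
    (tangentPoints K Q ∩ points W).card + (K ∩ points W).card ≤ q + 2 := by
  obtain ⟨f, hf⟩ := exists_injOn_of_finrank_eq hW
  have hinj := injOn_comp_rep hf
  have hcard : ∀ {T : Finset (ℙ F V)},
      ((T ∩ points W).image fun x => f x.rep).card = (T ∩ points W).card := fun {T} =>
    Finset.card_image_of_injOn <| hinj.mono fun x hx =>
      mem_points.mp (Finset.mem_inter.mp hx).2
  obtain ⟨α, β, hαβ⟩ := Submodule.mem_span_pair.mp hQ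
  have hβ : β ≠ 0 := by
    rintro rfl
    rw [zero_smul, add_zero] at hαβ
    have : Q = A := rep_mem_span_singleton_iff.mp (Submodule.mem_span_singleton.mpr ⟨α, hαβ⟩)
    exact hQK (this ▸ hA)
  have hmem : ∀ {B}, B ∈ K → B.rep ∈ lineThrough A A' →
      f B.rep ∈ (K ∩ points W).image fun x => f x.rep := fun hB h =>
    Finset.mem_image_of_mem _ (Finset.mem_inter.mpr ⟨hB, mem_points.mpr (hAW h)⟩)
  have hUS : ((tangentPoints K Q ∩ points W).image fun x => f x.rep) ⊆
      (K ∩ points W).image fun x => f x.rep :=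
    Finset.image_subset_image (Finset.inter_subset_inter_right (tangentPoints_subset K Q))
  rw [← hcard, ← hcard (T := K)]
  refine (hK.isPlaneArc_image hf).card_tangent_add_card_le (hmem hA (left_mem_lineThrough A A'))
    (hmem hA' (right_mem_lineThrough A A')) ?_ (α := α) hβ
    (Q := f Q.rep) (by simp [← hαβ]) hUS ?_
  · exact hinj.ne (hAW (left_mem_lineThrough A A')) (hAW (right_mem_lineThrough A A')) hAA'
  · simp only [Finset.forall_mem_image, Finset.mem_inter, mem_points, mem_tangentPoints]
    rintro r ⟨⟨hrK, hr⟩, hrW⟩ s ⟨hsK, hsW⟩ hsr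
    rw [bracket_swap]
    refine bracket_ne_zero_of_notMem_lineThrough hf hsW (hAW hQ) hrW ?_ (hr s hsK ?_)
    · rintro rfl; exact hQK hrK
    · rintro rfl; exact hsr rfl

theorem NoThreeCollinear.eq_or_eq_of_mem_lineThrough (hK : NoThreeCollinear K) (hx : x ∈ K)
    (hy : y ∈ K) (hz : z ∈ K) (hyz : y ≠ z) (h : x.rep ∈ lineThrough y z) : x = y ∨ x = z := by
  by_contra! hne
  exact hK x hx y hy z hz hne.1 hne.2 hyz h

theorem notMem_tangentPoints_of_mem_secant (hA' : A' ∈ K) (hAA' : A ≠ A')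
    (hQ : Q.rep ∈ lineThrough A A') (hQA : A ≠ Q) : A ∉ tangentPoints K Q := fun h => by
  refine (mem_tangentPoints.mp h).2 A' hA' hAA'.symm ?_
  rw [lineThrough_eq (finrank_lineThrough hAA') hQ (left_mem_lineThrough A A') hQA.symm]
  exact right_mem_lineThrough A A'

theorem tangentPoints_subset_sdiff_secant (hA : A ∈ K) (hA' : A' ∈ K) (hAA' : A ≠ A')
    (hQ : Q.rep ∈ lineThrough A A') (hQK : Q ∉ K) : tangentPoints K Q ⊆ K \ {A, A'} := by
  intro x hx
  simp only [Finset.mem_sdiff, Finset.mem_insert, Finset.mem_singleton, not_or]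
  refine ⟨tangentPoints_subset K Q hx, fun h => ?_, fun h => ?_⟩
  · exact notMem_tangentPoints_of_mem_secant hA' hAA' hQ (ne_of_mem_of_not_mem hA hQK) (h ▸ hx)
  · exact notMem_tangentPoints_of_mem_secant hA hAA'.symm (lineThrough_comm A A' ▸ hQ)
      (ne_of_mem_of_not_mem hA' hQK) (h ▸ hx)

theorem NoThreeCollinear.rep_notMem_lineThrough_of_mem_sdiff (hK : NoThreeCollinear K)
    (hA : A ∈ K) (hA' : A' ∈ K) (hAA' : A ≠ A') (hx : x ∈ K \ {A, A'}) :
    x.rep ∉ lineThrough A A' := by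
  simp only [Finset.mem_sdiff, Finset.mem_insert, Finset.mem_singleton] at hx
  exact fun h => hx.2 (hK.eq_or_eq_of_mem_lineThrough hx.1 hA hA' hAA' h)

theorem NoThreeCollinear.card_tangentPoints_inter_add_card_sdiff_inter_le [Fintype F]
    [FiniteDimensional F V] [CharP F 2] (hK : NoThreeCollinear K) (hA : A ∈ K) (hA' : A' ∈ K)
    (hAA' : A ≠ A') (hQ : Q.rep ∈ lineThrough A A') (hQK : Q ∉ K) (hW : finrank F W = 3)
    (hAW : lineThrough A A' ≤ W) :
    (tangentPoints K Q ∩ points W).card + ((K \ {A, A'}) ∩ points W).card ≤ q := by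
  have hbound := hK.card_tangentPoints_inter_plane_le hA hA' hAA' hQ hQK hW hAW
  have hsub : ({A, A'} : Finset (ℙ F V)) ⊆ K ∩ points W := by
    simp only [Finset.insert_subset_iff, Finset.singleton_subset_iff, Finset.mem_inter, mem_points]
    exact ⟨⟨hA, hAW (left_mem_lineThrough A A')⟩, hA', hAW (right_mem_lineThrough A A')⟩
  have hsplit := Finset.card_sdiff_add_card_eq_card hsub
  rw [Finset.card_pair hAA', ← Finset.sdiff_inter_right_comm] at hsplit
  omega

/-- The planes through a secant on `Q` partition the points off the secant. -/
theorem NoThreeCollinear.card_tangentPoints_add_card_le [Fintype F] [FiniteDimensional F V]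
    [CharP F 2] {n : ℕ} (hK : NoThreeCollinear K) (hn : finrank F V = n + 2) (hA : A ∈ K)
    (hA' : A' ∈ K) (hAA' : A ≠ A') (hQ : Q.rep ∈ lineThrough A A') (hQK : Q ∉ K) :
    (tangentPoints K Q).card + K.card ≤ (∑ i ∈ Finset.range n, q ^ i) * q + 2 := by
  set L := lineThrough A A'
  have hL : finrank F L = 2 := finrank_lineThrough hAA'
  have hoff : ∀ x ∈ K \ {A, A'}, x.rep ∉ L := fun x hx =>
    hK.rep_notMem_lineThrough_of_mem_sdiff hA hA' hAA' hx
  have htan := tangentPoints_subset_sdiff_secant hA hA' hAA' hQ hQK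
  have hplane : ∀ y, (tangentPoints K Q ∩ points (joinPoint L y)).card +
      ((K \ {A, A'}) ∩ points (joinPoint L y)).card ≤ q := fun y =>
    hK.card_tangentPoints_inter_add_card_sdiff_inter_le hA hA' hAA' hQ hQK
      (by rw [finrank_joinPoint, hL]) (le_joinPoint L y)
  have hquot : finrank F (V ⧸ L) = n := by
    have := L.finrank_quotient_add_finrank
    omega
  have hsum := Finset.sum_le_card_nsmul Finset.univ _ _ fun y _ => hplane y
  rw [Finset.sum_add_distrib, sum_card_inter_joinPoint fun x hx => hoff x (htan hx),
    sum_card_inter_joinPoint hoff, Finset.card_univ, card_projectivization hquot,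
    smul_eq_mul] at hsum
  have hcard := Finset.card_sdiff_add_card_eq_card (s := {A, A'}) (t := K) <| by
    simp [Finset.insert_subset_iff, hA, hA']
  rw [Finset.card_pair hAA'] at hcard
  omega

theorem sum_card_tangentPoints_eq (s : Finset (ℙ F V)) :
    ∑ Q ∈ s, (tangentPoints K Q).card = ∑ R ∈ K, {Q ∈ s | R ∈ tangentPoints K Q}.card := by
  refine Eq.trans (Finset.sum_congr rfl fun Q _ => ?_)
    (Finset.sum_card_bipartiteAbove_eq_sum_card_bipartiteBelow fun Q R => R ∈ tangentPoints K Q)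
  rw [Finset.bipartiteAbove, Finset.filter_mem_eq_inter,
    Finset.inter_eq_right.mpr (tangentPoints_subset K Q)]

end Tangents

section Star

open scoped Classical LinearAlgebra.Projectivization

variable {F V : Type*} [Field F] [AddCommGroup V] [Module F V] {K : Finset (ℙ F V)}
  {P Q R S : ℙ F V} {x y z : ℙ F (V ⧸ P.submodule)}

theorem finrank_joinPoint_submodule [FiniteDimensional F V] :
    finrank F (joinPoint P.submodule y) = 2 := by
  rw [finrank_joinPoint, P.finrank_submodule]

theorem finrank_quotient_submodule [FiniteDimensional F V] {n : ℕ} (hn : finrank F V = n + 1) :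
    finrank F (V ⧸ P.submodule) = n := by
  have := P.submodule.finrank_quotient_add_finrank
  rw [P.finrank_submodule] at this
  omega

theorem rep_mem_joinPoint_submodule : P.rep ∈ joinPoint P.submodule y :=
  le_joinPoint _ y (rep_mem_submodule_iff.mpr rfl)

theorem joinPoint_eq_lineThrough [FiniteDimensional F V] (hR : R ≠ P)
    (h : R.rep ∈ joinPoint P.submodule y) :
    joinPoint P.submodule y = lineThrough P R :=
  (lineThrough_eq finrank_joinPoint_submodule rep_mem_joinPoint_submodule h hR.symm).symm

theorem NoThreeCollinear.eq_of_mem_joinPoint [FiniteDimensional F V] (hK : NoThreeCollinear K)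
    (hP : P ∈ K) (hR : R ∈ K) (hRP : R ≠ P) (hS : S ∈ K) (hSP : S ≠ P)
    (hRy : R.rep ∈ joinPoint P.submodule y)
    (hSy : S.rep ∈ joinPoint P.submodule y) : R = S := by
  rw [joinPoint_eq_lineThrough hSP hSy] at hRy
  exact (hK.eq_or_eq_of_mem_lineThrough hR hP hS hSP.symm hRy).resolve_left hRP

variable [Fintype F] [FiniteDimensional F V]

local notation "q" => Fintype.card F

/-- The tangents of `K` at `P`, as points of the quotient of the projective space by `P`. -/
noncomputable def tangentLines (K : Finset (ℙ F V)) (P : ℙ F V) :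
    Finset (ℙ F (V ⧸ P.submodule)) :=
  {y | ∀ R ∈ K, R ≠ P → R.rep ∉ joinPoint P.submodule y}

theorem mem_tangentLines :
    y ∈ tangentLines K P ↔ ∀ R ∈ K, R ≠ P → R.rep ∉ joinPoint P.submodule y := by
  simp [tangentLines]

theorem notMem_tangentLines :
    y ∉ tangentLines K P ↔ ∃ R ∈ K, R ≠ P ∧ R.rep ∈ joinPoint P.submodule y := by
  simp [mem_tangentLines]

theorem NoThreeCollinear.card_inter_points_comap (hK : NoThreeCollinear K) (hP : P ∈ K)
    (W : Submodule F (V ⧸ P.submodule)) :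
    (K ∩ points (W.comap P.submodule.mkQ)).card = (points W \ tangentLines K P).card + 1 := by
  have hPmem : P ∈ K ∩ points (W.comap P.submodule.mkQ) :=
    Finset.mem_inter.mpr ⟨hP, mem_points.mpr <|
      P.submodule.le_comap_mkQ W (rep_mem_submodule_iff.mpr rfl)⟩
  rw [← Finset.card_erase_add_one hPmem, Nat.add_right_cancel_iff]
  have hoff : ∀ {R}, R ≠ P → R.rep ∉ P.submodule := rep_mem_submodule_iff.not.mpr
  apply le_antisymm
  · refine Finset.card_le_card_of_forall_subsingleton
      (fun R y => R.rep ∈ joinPoint P.submodule y) (fun R hR => ?_) fun y _ R hR S hS => ?_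
    · simp only [Finset.mem_erase, Finset.mem_inter, mem_points] at hR
      obtain ⟨y, hy⟩ := exists_rep_mem_joinPoint (hoff hR.1)
      refine ⟨y, Finset.mem_sdiff.mpr ⟨mem_points.mpr ?_, ?_⟩, hy⟩
      · exact (rep_mem_iff_of_rep_mem_joinPoint (hoff hR.1) hy).mpr hR.2.2
      · exact notMem_tangentLines.mpr ⟨R, hR.2.1, hR.1, hy⟩
    · simp only [Finset.mem_erase, Finset.mem_inter, Set.mem_ofPred_eq] at hR hS
      exact hK.eq_of_mem_joinPoint hP hR.1.2.1 hR.1.1 hS.1.2.1 hS.1.1 hR.2 hS.2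
  · refine Finset.card_le_card_of_forall_subsingleton
      (fun y R => R.rep ∈ joinPoint P.submodule y) (fun y hy => ?_) fun R hR y hy z hz => ?_
    · rw [Finset.mem_sdiff, mem_points, notMem_tangentLines] at hy
      obtain ⟨hyW, R, hR, hRP, hRy⟩ := hy
      refine ⟨R, ?_, hRy⟩
      simp only [Finset.mem_erase, Finset.mem_inter, mem_points]
      exact ⟨hRP, hR, (rep_mem_iff_of_rep_mem_joinPoint (hoff hRP) hRy).mp hyW⟩
    · exact joinPoint_unique (hoff (Finset.ne_of_mem_erase hR)) hy.2 hz.2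

theorem NoThreeCollinear.card_tangentLines_add_card {n : ℕ} (hK : NoThreeCollinear K) (hP : P ∈ K)
    (hn : finrank F V = n + 1) :
    (tangentLines K P).card + K.card = ∑ i ∈ Finset.range n, q ^ i + 1 := by
  have huniv : ∀ {W : Type _} [AddCommGroup W] [Module F W] [FiniteDimensional F W],
      points (⊤ : Submodule F W) = Finset.univ := by
    intros
    ext
    simp [mem_points]
  have hcard := hK.card_inter_points_comap hP ⊤
  rw [Submodule.comap_top, huniv, huniv, Finset.inter_univ, ← Finset.compl_eq_univ_sdiff] at hcard
  have := Finset.card_add_card_compl (tangentLines K P)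
  rw [card_projectivization (finrank_quotient_submodule hn)] at this
  omega

/-- The points other than `P` on the line through `P` represented by the point `x` of the
quotient. -/
noncomputable def affinePoints (P : ℙ F V) (x : ℙ F (V ⧸ P.submodule)) : Finset (ℙ F V) :=
  (points (joinPoint P.submodule x)).erase P

theorem mem_affinePoints :
    Q ∈ affinePoints P x ↔ Q ≠ P ∧ Q.rep ∈ joinPoint P.submodule x := by
  rw [affinePoints, Finset.mem_erase, mem_points]

theorem card_affinePoints : (affinePoints P x).card = q := by
  rw [affinePoints, Finset.card_erase_of_mem (mem_points.mpr rep_mem_joinPoint_submodule),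
    card_points finrank_joinPoint_submodule]
  simp [Finset.sum_range_succ]

theorem mem_tangentPoints_of_mem_affinePoints (hP : P ∈ K) (hx : x ∈ tangentLines K P)
    (hQ : Q ∈ affinePoints P x) : P ∈ tangentPoints K Q := by
  rw [mem_affinePoints] at hQ
  refine mem_tangentPoints.mpr ⟨hP, fun S hS hSP => ?_⟩
  rw [lineThrough_comm, ← joinPoint_eq_lineThrough hQ.1 hQ.2]
  exact mem_tangentLines.mp hx S hS hSP

theorem exists_secant_of_notMem_tangentPoints (hQ : Q ∈ affinePoints P x) (hR : R ∈ K)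
    (hRx : R.rep ∉ joinPoint P.submodule x) (h : R ∉ tangentPoints K Q) :
    ∃ S ∈ K, S ≠ R ∧ S ≠ P ∧ S.rep ∈ lineThrough Q R := by
  rw [mem_affinePoints] at hQ
  simp only [mem_tangentPoints, hR, true_and, not_forall, not_not] at h
  obtain ⟨S, hS, hSR, hSQR⟩ := h
  refine ⟨S, hS, hSR, ?_, hSQR⟩
  rintro rfl
  rw [joinPoint_eq_lineThrough hQ.1 hQ.2] at hRx
  have hQR : Q ≠ R := fun h => hRx (h ▸ right_mem_lineThrough S Q)
  rw [lineThrough_eq (finrank_lineThrough hQR) hSQR (left_mem_lineThrough Q R) hQ.1.symm] at hRx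
  exact hRx (right_mem_lineThrough Q R)

theorem eq_of_mem_lineThrough_of_mem_affinePoints {Q' : ℙ F V} (hQ : Q ∈ affinePoints P x)
    (hQ' : Q' ∈ affinePoints P x) (hRx : R.rep ∉ joinPoint P.submodule x) (hSR : S ≠ R)
    (h : S.rep ∈ lineThrough Q R) (h' : S.rep ∈ lineThrough Q' R) : Q = Q' := by
  rw [mem_affinePoints] at hQ hQ'
  have hmem : ∀ {T : ℙ F V}, T.rep ∈ joinPoint P.submodule x → S.rep ∈ lineThrough T R →
      T.rep ∈ lineThrough S R := fun {T} hT hS => by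
    have hTR : T ≠ R := by
      rintro rfl
      exact hRx hT
    rw [lineThrough_eq (finrank_lineThrough hTR) hS (right_mem_lineThrough T R) hSR]
    exact left_mem_lineThrough T R
  by_contra hne
  rw [← lineThrough_eq finrank_joinPoint_submodule hQ.2 hQ'.2 hne,
    lineThrough_eq (finrank_lineThrough hSR) (hmem hQ.2 h) (hmem hQ'.2 h') hne] at hRx
  exact hRx (right_mem_lineThrough S R)

/-- The secants on `R` through points of a tangent `x` at `P` project from `P` into the line `xz`,
where `z` is the image of `R`. -/
theorem NoThreeCollinear.card_filter_notMem_tangentPoints_lt (hK : NoThreeCollinear K) (hP : P ∈ K)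
    (hx : x ∈ tangentLines K P) (hR : R ∈ K) (hRP : R ≠ P) (hRz : R.rep ∈ joinPoint P.submodule z) :
    {Q ∈ affinePoints P x | R ∉ tangentPoints K Q}.card <
      (points (lineThrough x z) \ tangentLines K P).card := by
  have hRx : R.rep ∉ joinPoint P.submodule x := mem_tangentLines.mp hx R hR hRP
  have hz : z ∈ points (lineThrough x z) \ tangentLines K P :=
    Finset.mem_sdiff.mpr ⟨mem_points.mpr (right_mem_lineThrough x z),
      notMem_tangentLines.mpr ⟨R, hR, hRP, hRz⟩⟩
  rw [← Finset.card_erase_add_one hz, Nat.lt_succ_iff]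
  refine Finset.card_le_card_of_forall_subsingleton (fun Q y => ∃ S ∈ K, S ≠ R ∧ S ≠ P ∧
    S.rep ∈ lineThrough Q R ∧ S.rep ∈ joinPoint P.submodule y) (fun Q hQ => ?_) ?_
  · obtain ⟨hQx, hRQ⟩ := Finset.mem_filter.mp hQ
    obtain ⟨S, hS, hSR, hSP, hSQR⟩ := exists_secant_of_notMem_tangentPoints hQx hR hRx hRQ
    have hSoff : S.rep ∉ P.submodule := rep_mem_submodule_iff.not.mpr hSP
    obtain ⟨y, hSy⟩ := exists_rep_mem_joinPoint hSoff
    have hyz : y ≠ z := by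
      rintro rfl
      exact hSR (hK.eq_of_mem_joinPoint hP hS hSP hR hRP hSy hRz)
    have hle : lineThrough Q R ≤ (lineThrough x z).comap P.submodule.mkQ := by
      refine lineThrough_le ?_ ?_
      · exact Submodule.comap_mono (submodule_le_iff.mpr (left_mem_lineThrough x z))
          (mem_affinePoints.mp hQx).2
      · exact Submodule.comap_mono (submodule_le_iff.mpr (right_mem_lineThrough x z)) hRz
    refine ⟨y, Finset.mem_erase.mpr ⟨hyz, Finset.mem_sdiff.mpr ⟨mem_points.mpr ?_, ?_⟩⟩,
      S, hS, hSR, hSP, hSQR, hSy⟩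
    · exact (rep_mem_iff_of_rep_mem_joinPoint hSoff hSy).mpr (hle hSQR)
    · exact notMem_tangentLines.mpr ⟨S, hS, hSP, hSy⟩
  · rintro y - Q ⟨hQ, S, hS, hSR, hSP, hSQ, hSy⟩ Q' ⟨hQ', S', hS', -, hSP', hSQ', hSy'⟩
    obtain rfl := hK.eq_of_mem_joinPoint hP hS hSP hS' hSP' hSy hSy'
    exact eq_of_mem_lineThrough_of_mem_affinePoints (Finset.mem_filter.mp hQ).1
      (Finset.mem_filter.mp hQ').1 hRx hSR hSQ hSQ'

theorem NoThreeCollinear.card_line_inter_le_card_filter_mem_tangentPoints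
    (hK : NoThreeCollinear K) (hP : P ∈ K) (hx : x ∈ tangentLines K P) (hR : R ∈ K) (hRP : R ≠ P)
    (hRz : R.rep ∈ joinPoint P.submodule z) :
    (points (lineThrough x z) ∩ tangentLines K P).card ≤
      {Q ∈ affinePoints P x | R ∈ tangentPoints K Q}.card := by
  have hlt := hK.card_filter_notMem_tangentPoints_lt hP hx hR hRP hRz
  have hxz : x ≠ z := by
    rintro rfl
    exact mem_tangentLines.mp hx R hR hRP hRz
  have h₁ := Finset.card_filter_add_card_filter_not (s := affinePoints P x)
    fun Q => R ∈ tangentPoints K Q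
  have h₂ := Finset.card_inter_add_card_sdiff (points (lineThrough x z)) (tangentLines K P)
  rw [card_affinePoints] at h₁
  rw [card_points_lineThrough hxz] at h₂
  omega

theorem NoThreeCollinear.card_tangentPoints_le_card_tangentLines [CharP F 2] {n : ℕ}
    (hK : NoThreeCollinear K) (hcov : SecantsCover K) (hn : finrank F V = n + 2) (hP : P ∈ K)
    (hQ : Q ∉ K) : (tangentPoints K Q).card ≤ (tangentLines K P).card := by
  obtain ⟨A, hA, A', hA', hAA', hQA⟩ := hcov Q hQ
  have htan := hK.card_tangentPoints_add_card_le hn hA hA' hAA' hQA hQ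
  have hstar := hK.card_tangentLines_add_card hP (n := n + 1) hn
  rw [Finset.sum_range_succ', pow_zero] at hstar
  simp only [pow_succ, ← Finset.sum_mul] at hstar
  omega

theorem notMem_of_mem_affinePoints (hx : x ∈ tangentLines K P) (hQ : Q ∈ affinePoints P x) :
    Q ∉ K := fun h =>
  have hQ := mem_affinePoints.mp hQ
  mem_tangentLines.mp hx Q h hQ.1 hQ.2

theorem exists_injOn_mem_joinPoint (K : Finset (ℙ F V)) (P : ℙ F V) :
    ∃ r : ℙ F (V ⧸ P.submodule) → ℙ F V, Set.InjOn r ((tangentLines K P)ᶜ : Finset _) ∧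
      ∀ z ∉ tangentLines K P, r z ∈ K ∧ r z ≠ P ∧ (r z).rep ∈ joinPoint P.submodule z := by
  have hex : ∀ z, ∃ R, z ∉ tangentLines K P → R ∈ K ∧ R ≠ P ∧ R.rep ∈ joinPoint P.submodule z :=
    fun z => by
      by_cases hz : z ∈ tangentLines K P
      · exact ⟨P, fun h => absurd hz h⟩
      · obtain ⟨R, hR⟩ := notMem_tangentLines.mp hz
        exact ⟨R, fun _ => hR⟩
  choose r hr using hex
  refine ⟨r, fun y hy z hz hyz => ?_, hr⟩
  rw [Finset.mem_coe, Finset.mem_compl] at hy hz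
  obtain ⟨-, hyP, hy⟩ := hr y hy
  exact joinPoint_unique (rep_mem_submodule_iff.not.mpr hyP) hy (hyz ▸ (hr z hz).2.2)

/-- Count the pairs of a point `Q ≠ P` of the tangent `x` and a point of `K` tangent to `Q`. -/
theorem NoThreeCollinear.sum_card_line_inter_add_le [CharP F 2] {n : ℕ}
    (hK : NoThreeCollinear K) (hcov : SecantsCover K) (hn : finrank F V = n + 2) (hP : P ∈ K)
    (hx : x ∈ tangentLines K P) :
    ∑ z ∈ (tangentLines K P)ᶜ, (points (lineThrough x z) ∩ tangentLines K P).card + q ≤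
      q * (tangentLines K P).card := by
  obtain ⟨r, hinj, hr⟩ := exists_injOn_mem_joinPoint K P
  let c R := {Q ∈ affinePoints P x | R ∈ tangentPoints K Q}.card
  have hP_count : c P = q := by
    rw [← card_affinePoints (x := x)]
    exact congrArg Finset.card <| Finset.filter_true_of_mem fun Q hQ =>
      mem_tangentPoints_of_mem_affinePoints hP hx hQ
  calc _ ≤ ∑ z ∈ (tangentLines K P)ᶜ, c (r z) + q := by
        gcongr with z hz
        obtain ⟨hrK, hrP, hrz⟩ := hr z (Finset.mem_compl.mp hz)
        exact hK.card_line_inter_le_card_filter_mem_tangentPoints hP hx hrK hrP hrz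
    _ = ∑ R ∈ (tangentLines K P)ᶜ.image r, c R + q := by rw [Finset.sum_image hinj]
    _ ≤ ∑ R ∈ K.erase P, c R + c P := by
        rw [hP_count]
        gcongr
        refine Finset.image_subset_iff.mpr fun z hz => ?_
        have h := hr z (Finset.mem_compl.mp hz)
        exact Finset.mem_erase.mpr ⟨h.2.1, h.1⟩
    _ = ∑ Q ∈ affinePoints P x, (tangentPoints K Q).card := by
        rw [Finset.sum_erase_add _ _ hP, sum_card_tangentPoints_eq]
    _ ≤ (affinePoints P x).card • (tangentLines K P).card :=
        Finset.sum_le_card_nsmul _ _ _ fun Q hQ =>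
          hK.card_tangentPoints_le_card_tangentLines hcov hn hP (notMem_of_mem_affinePoints hx hQ)
    _ = q * (tangentLines K P).card := by rw [card_affinePoints, smul_eq_mul]

theorem NoThreeCollinear.isSaturated_tangentLines [CharP F 2] (hK : NoThreeCollinear K)
    (hcov : SecantsCover K) (hV : finrank F V = 5) (hP : P ∈ K) :
    (planarSpace F (V ⧸ P.submodule)).IsSaturated (tangentLines K P) := by
  intro x hx
  set G := planarSpace F (V ⧸ P.submodule)
  set T := tangentLines K P
  have hcount : ∑ z ∈ Tᶜ, (G.line x z ∩ T).card + q ≤ q * T.card :=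
    hK.sum_card_line_inter_add_le hcov hV hP hx
  have hswap := G.sum_card_line_inter_comm T (D := Tᶜ) (x := x) (by simpa using hx)
  have hexterior : ∑ y ∈ T.erase x, G.lineCount T x y +
      ∑ y ∈ T.erase x, (G.line x y ∩ Tᶜ).card = (T.card - 1) * q := by
    rw [← Finset.sum_add_distrib, ← Finset.card_erase_of_mem hx, ← smul_eq_mul, ← Finset.sum_const]
    refine Finset.sum_congr rfl fun y hy => ?_
    have hxy : x ≠ y := (Finset.ne_of_mem_erase hy).symm
    rw [← Finset.sdiff_eq_inter_compl, G.lineCount_add_card_sdiff hx hxy]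
  have hinterior : ∑ z ∈ Tᶜ, (G.line x z ∩ T).card =
      ∑ z ∈ Tᶜ, ((G.line x z ∩ T).erase x).card + Tᶜ.card := by
    rw [Finset.card_eq_sum_ones, ← Finset.sum_add_distrib]
    refine Finset.sum_congr rfl fun z hz => (G.lineCount_add_one hx ?_).symm
    exact ne_of_mem_of_not_mem hx (Finset.mem_compl.mp hz)
  have htotal := Finset.card_add_card_compl T
  rw [card_projectivization (finrank_quotient_submodule hV)] at htotal
  simp only [Finset.sum_range_succ, Finset.sum_range_zero, pow_zero, pow_one] at htotal
  have hT : T.card * q = (T.card - 1) * q + q := by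
    rw [← Nat.succ_mul, Nat.succ_eq_add_one, Nat.sub_add_cancel (Finset.card_pos.mpr ⟨x, hx⟩)]
  rw [mul_comm] at hT
  omega

end Star

section Hyperplanes

open scoped Classical LinearAlgebra.Projectivization

variable {F V : Type*} [Field F] [AddCommGroup V] [Module F V] [FiniteDimensional F V]
  {P R : ℙ F V}

local notation "q" => Fintype.card F

theorem exists_ker_rep_eq {U : Submodule F V} (hU : finrank F U + 1 = finrank F V) :
    ∃ h : ℙ F (Dual F V), LinearMap.ker h.rep = U := by
  have hlt : U < ⊤ := lt_top_iff_ne_top.mpr fun h => by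
    rw [h, finrank_top] at hU
    omega
  obtain ⟨φ, hφ, hUφ⟩ := U.exists_le_ker_of_lt_top hlt
  have hrep : U ≤ LinearMap.ker (Projectivization.mk F φ hφ).rep := by
    obtain ⟨a, ha⟩ := Projectivization.exists_smul_eq_mk_rep F φ hφ
    intro v hv
    rw [LinearMap.mem_ker, ← ha, LinearMap.smul_apply, hUφ hv, smul_zero]
  refine ⟨.mk F φ hφ, (Submodule.eq_of_le_of_finrank_eq hrep ?_).symm⟩
  have := Dual.finrank_ker_add_one_of_ne_zero (Projectivization.mk F φ hφ).rep_nonzero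
  omega

variable [Fintype F] {K : Finset (ℙ F V)} {n : ℕ}

theorem card_hyperplanes_through {W : Submodule F V} (hn : finrank F V = n + finrank F W) :
    ({h | W ≤ LinearMap.ker h.rep} : Finset (ℙ F (Dual F V))).card =
      ∑ i ∈ Finset.range n, q ^ i := by
  have hrank := Subspace.finrank_add_finrank_dualAnnihilator_eq W
  rw [← card_points (W := W.dualAnnihilator) (n := n) (by omega)]
  congr 1
  ext h
  rw [mem_points, Submodule.mem_dualAnnihilator, Finset.mem_filter]
  exact and_iff_right (Finset.mem_univ h)

theorem card_hyperplanes_through_point (hn : finrank F V = n + 1) (P : ℙ F V) :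
    ({h | P.rep ∈ LinearMap.ker h.rep} : Finset (ℙ F (Dual F V))).card =
      ∑ i ∈ Finset.range n, q ^ i := by
  simp only [← submodule_le_iff]
  exact card_hyperplanes_through (by rw [hn, P.finrank_submodule])

theorem card_hyperplanes_through_pair (hn : finrank F V = n + 2) (hPR : P ≠ R) :
    ({h | P.rep ∈ LinearMap.ker h.rep ∧ R.rep ∈ LinearMap.ker h.rep} :
      Finset (ℙ F (Dual F V))).card =
      ∑ i ∈ Finset.range n, q ^ i := by
  rw [← card_hyperplanes_through (W := lineThrough P R) (by rw [hn, finrank_lineThrough hPR])]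
  congr 1
  ext h
  simp [lineThrough, Submodule.span_le, Set.insert_subset_iff]

/-- The number of points of `K` on the hyperplane with equation `h`. -/
noncomputable def hyperplaneCount (K : Finset (ℙ F V)) (h : ℙ F (Dual F V)) : ℕ :=
  (K ∩ points (LinearMap.ker h.rep)).card

theorem hyperplaneCount_eq_sum (K : Finset (ℙ F V)) (h : ℙ F (Dual F V)) :
    hyperplaneCount K h = ∑ P ∈ K, if P.rep ∈ LinearMap.ker h.rep then 1 else 0 := by
  simp only [hyperplaneCount, ← Finset.card_filter, ← Finset.filter_mem_eq_inter, mem_points]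

theorem sum_hyperplaneCount (hn : finrank F V = n + 1) (K : Finset (ℙ F V)) :
    ∑ h, hyperplaneCount K h = K.card * ∑ i ∈ Finset.range n, q ^ i := by
  simp only [hyperplaneCount_eq_sum]
  rw [Finset.sum_comm, ← smul_eq_mul, ← Finset.sum_const]
  refine Finset.sum_congr rfl fun P _ => ?_
  rw [← Finset.card_filter, card_hyperplanes_through_point hn]

theorem sum_hyperplaneCount_sq (hn : finrank F V = n + 2) (K : Finset (ℙ F V)) :
    ∑ h, hyperplaneCount K h ^ 2 = K.card * ∑ i ∈ Finset.range (n + 1), q ^ i +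
      K.card * (K.card - 1) * ∑ i ∈ Finset.range n, q ^ i := by
  simp only [hyperplaneCount_eq_sum, sq, Finset.sum_mul_sum, ite_zero_mul_ite_zero, mul_one]
  have hpair : ∀ P ∈ K, ∑ R ∈ K, ∑ h : ℙ F (Dual F V),
      (if P.rep ∈ LinearMap.ker h.rep ∧ R.rep ∈ LinearMap.ker h.rep then 1 else 0) =
      ∑ i ∈ Finset.range (n + 1), q ^ i + (K.card - 1) * ∑ i ∈ Finset.range n, q ^ i := by
    intro P hP
    simp only [← Finset.card_filter]
    rw [← Finset.add_sum_erase _ _ hP, ← Finset.card_erase_of_mem hP, ← smul_eq_mul (Finset.card _),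
      ← Finset.sum_const]
    simp only [and_self]
    rw [card_hyperplanes_through_point hn]
    refine congrArg _ (Finset.sum_congr rfl fun R hR => ?_)
    exact card_hyperplanes_through_pair hn (Finset.ne_of_mem_erase hR).symm
  rw [Finset.sum_comm]
  simp only [Finset.sum_comm (s := Finset.univ)]
  rw [Finset.sum_congr rfl hpair, Finset.sum_const, smul_eq_mul]
  ring

theorem sum_sq_hyperplaneCount_sub (hn : finrank F V = n + 2) (K : Finset (ℙ F V)) :
    ∑ h, ((q : ℤ) * hyperplaneCount K h - K.card) ^ 2 =
      K.card * (q : ℤ) ^ (n + 2) - (q - 1) * (K.card : ℤ) ^ 2 := by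
  have h₁ : ∑ h, (hyperplaneCount K h : ℤ) = K.card * ∑ i ∈ Finset.range (n + 1), (q : ℤ) ^ i :=
    mod_cast sum_hyperplaneCount hn K
  have h₂ : ∑ h, (hyperplaneCount K h : ℤ) ^ 2 =
      K.card * ∑ i ∈ Finset.range (n + 1), (q : ℤ) ^ i +
        K.card * (K.card - 1) * ∑ i ∈ Finset.range n, (q : ℤ) ^ i := by
    have := congrArg (Nat.cast : ℕ → ℤ) (sum_hyperplaneCount_sq hn K)
    rcases K.card.eq_zero_or_pos with h0 | hpos
    · simpa [h0] using this
    · push_cast [Nat.cast_sub hpos] at this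
      exact this
  have h₀ : (Fintype.card (ℙ F (Dual F V)) : ℤ) = ∑ i ∈ Finset.range (n + 2), (q : ℤ) ^ i :=
    mod_cast card_projectivization (Subspace.dual_finrank_eq.trans hn)
  have hexpand : ∑ h, ((q : ℤ) * hyperplaneCount K h - K.card) ^ 2 =
      q ^ 2 * ∑ h, (hyperplaneCount K h : ℤ) ^ 2 - 2 * q * K.card * ∑ h, (hyperplaneCount K h : ℤ) +
        Fintype.card (ℙ F (Dual F V)) * K.card ^ 2 := by
    have hterm : ∀ h, ((q : ℤ) * hyperplaneCount K h - K.card) ^ 2 =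
        q ^ 2 * hyperplaneCount K h ^ 2 - 2 * q * K.card * hyperplaneCount K h + K.card ^ 2 :=
      fun h => by ring
    simp only [hterm, Finset.sum_add_distrib, Finset.sum_sub_distrib, Finset.mul_sum,
      Finset.sum_const, Finset.card_univ, nsmul_eq_mul]
  have hgeom := geom_sum_succ (x := (q : ℤ)) (n := n)
  have htop := Finset.sum_range_succ (fun i => (q : ℤ) ^ i) n
  rw [hexpand, h₀, h₁, h₂, Finset.sum_range_succ _ (n + 1)]
  linear_combination (K.card : ℤ) ^ 2 * (1 - q) * hgeom + (K.card * q ^ 2 - K.card ^ 2 * q) * htop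

theorem card_mul_le_card_of_le_sum_inv {c : ℚ} {𝓢 : Finset (ℙ F (Dual F V))}
    (h : ∀ P ∈ K, c ≤ ∑ h ∈ 𝓢 with P.rep ∈ LinearMap.ker h.rep, (hyperplaneCount K h : ℚ)⁻¹) :
    c * K.card ≤ 𝓢.card := by
  have hcount : ∀ h, ∑ P ∈ K with P.rep ∈ LinearMap.ker h.rep, (hyperplaneCount K h : ℚ)⁻¹ ≤ 1 := by
    intro h
    rw [Finset.sum_const, nsmul_eq_mul, Finset.card_filter, ← hyperplaneCount_eq_sum]
    exact mul_inv_le_one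
  calc c * K.card = ∑ _P ∈ K, c := by rw [Finset.sum_const, nsmul_eq_mul, mul_comm]
    _ ≤ ∑ P ∈ K, ∑ h ∈ 𝓢 with P.rep ∈ LinearMap.ker h.rep, (hyperplaneCount K h : ℚ)⁻¹ :=
        Finset.sum_le_sum h
    _ = ∑ h ∈ 𝓢, ∑ P ∈ K with P.rep ∈ LinearMap.ker h.rep, (hyperplaneCount K h : ℚ)⁻¹ := by
        simp only [Finset.sum_filter]
        exact Finset.sum_comm
    _ ≤ ∑ _h ∈ 𝓢, 1 := Finset.sum_le_sum fun h _ => hcount h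
    _ = 𝓢.card := by simp

end Hyperplanes

section LargeCaps

open scoped Classical LinearAlgebra.Projectivization

variable {F V : Type*} [Field F] [Fintype F] [AddCommGroup V] [Module F V]
  [FiniteDimensional F V] {K : Finset (ℙ F V)} {P : ℙ F V}

local notation "q" => Fintype.card F

theorem mem_planes_planarSpace {H : Finset (ℙ F V)} :
    H ∈ (planarSpace F V).planes ↔ ∃ W : Submodule F V, finrank F W = 3 ∧ H = points W := by
  simp [planarSpace]

theorem NoThreeCollinear.exists_injOn_hyperplaneCount_eq (hK : NoThreeCollinear K)
    (hV : finrank F V = 5) (hP : P ∈ K) :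
    ∃ f : Finset (ℙ F (V ⧸ P.submodule)) → ℙ F (Dual F V),
      Set.InjOn f (planarSpace F (V ⧸ P.submodule)).planes ∧
      ∀ H ∈ (planarSpace F (V ⧸ P.submodule)).planes, P.rep ∈ LinearMap.ker (f H).rep ∧
        hyperplaneCount K (f H) = (H \ tangentLines K P).card + 1 := by
  have hex : ∀ H ∈ (planarSpace F (V ⧸ P.submodule)).planes, ∃ h : ℙ F (Dual F V),
      ∃ W, H = points W ∧ LinearMap.ker h.rep = W.comap P.submodule.mkQ := by
    intro H hH
    obtain ⟨W, hW, rfl⟩ := mem_planes_planarSpace.mp hH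
    obtain ⟨h, hker⟩ := exists_ker_rep_eq (U := W.comap P.submodule.mkQ) <| by
      rw [finrank_comap_mkQ, P.finrank_submodule, hW, hV]
    exact ⟨h, W, rfl, hker⟩
  have : Nontrivial V := nontrivial_of_finrank_pos (R := F) (by omega)
  choose! f W hW hker using hex
  refine ⟨f, fun H hH H' hH' h => ?_, fun H hH => ⟨?_, ?_⟩⟩
  · rw [hW H hH, hW H' hH', Submodule.comap_injective_of_surjective P.submodule.mkQ_surjective
      ((hker H hH).symm.trans (h ▸ hker H' hH'))]
  · rw [hker H hH, ← submodule_le_iff]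
    exact P.submodule.le_comap_mkQ _
  · rw [hyperplaneCount, hker H hH, hK.card_inter_points_comap hP, ← hW H hH]

/-- The hyperplanes that meet the cap `K` in at most `8q/5 + 1` points, far fewer than the
`|K|/q` points on a typical one. -/
noncomputable def sparseHyperplanes (K : Finset (ℙ F V)) : Finset (ℙ F (Dual F V)) :=
  {h | 5 * hyperplaneCount K h ≤ 8 * q + 5}

theorem mem_sparseHyperplanes {h : ℙ F (Dual F V)} :
    h ∈ sparseHyperplanes K ↔ 5 * hyperplaneCount K h ≤ 8 * q + 5 := by
  simp [sparseHyperplanes]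

theorem NoThreeCollinear.le_sum_sparseHyperplanes_inv [CharP F 2] (hK : NoThreeCollinear K)
    (hcov : SecantsCover K) (hV : finrank F V = 5) (hq : 1024 ≤ q) (hP : P ∈ K)
    (hne : (tangentLines K P).Nonempty) (hT : (tangentLines K P).card + 100 * q ≤ 3 * q ^ 2) :
    6 / (5 * (q : ℚ)) ≤
      ∑ h ∈ sparseHyperplanes K with P.rep ∈ LinearMap.ker h.rep, (hyperplaneCount K h : ℚ)⁻¹ := by
  have hq' : (1024 : ℚ) ≤ q := mod_cast hq
  obtain ⟨f, hf, hfP⟩ := hK.exists_injOn_hyperplaneCount_eq hV hP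
  have hinv {b : ℕ} {H} (hH : H ∈ (planarSpace F (V ⧸ P.submodule)).planes)
      (hb : 5 * (H \ tangentLines K P).card ≤ b) :
      5 / (b + 5 : ℚ) ≤ (hyperplaneCount K (f H) : ℚ)⁻¹ := by
    rw [(hfP H hH).2, ← one_div, div_le_div_iff₀ (by positivity) (by positivity), one_mul]
    exact_mod_cast by omega
  have hmem {H} (hH : H ∈ (planarSpace F (V ⧸ P.submodule)).planes)
      (hb : 5 * (H \ tangentLines K P).card ≤ 8 * q) :
      f H ∈ ({h ∈ sparseHyperplanes K | P.rep ∈ LinearMap.ker h.rep} : Finset _) := by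
    rw [Finset.mem_filter, mem_sparseHyperplanes, (hfP H hH).2]
    exact ⟨by omega, (hfP H hH).1⟩
  have hnonneg (h : ℙ F (Dual F V)) : 0 ≤ (hyperplaneCount K h : ℚ)⁻¹ := by positivity
  obtain ⟨H, hH, hle⟩ | ⟨H₁, hH₁, H₂, hH₂, hne, hle₁, hle₂⟩ :=
    (hK.isSaturated_tangentLines hcov hV hP).exists_almost_contained_planes hq hne hT
  · calc 6 / (5 * (q : ℚ)) ≤ 5 / (↑(3 * q) + 5) := by
          push_cast
          rw [div_le_div_iff₀ (by positivity) (by positivity)]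
          linarith
      _ ≤ (hyperplaneCount K (f H) : ℚ)⁻¹ := hinv hH hle
      _ ≤ _ := Finset.single_le_sum (fun h _ => hnonneg h) (hmem hH (by omega))
  · have hsub : {f H₁, f H₂} ⊆
        ({h ∈ sparseHyperplanes K | P.rep ∈ LinearMap.ker h.rep} : Finset _) :=
      Finset.insert_subset (hmem hH₁ hle₁) (Finset.singleton_subset_iff.mpr (hmem hH₂ hle₂))
    calc 6 / (5 * (q : ℚ)) ≤ 5 / (↑(8 * q) + 5) + 5 / (↑(8 * q) + 5) := by
          push_cast
          rw [← add_div, div_le_div_iff₀ (by positivity) (by positivity)]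
          linarith
      _ ≤ (hyperplaneCount K (f H₁) : ℚ)⁻¹ + (hyperplaneCount K (f H₂) : ℚ)⁻¹ :=
        add_le_add (hinv hH₁ hle₁) (hinv hH₂ hle₂)
      _ = ∑ h ∈ {f H₁, f H₂}, (hyperplaneCount K h : ℚ)⁻¹ :=
        (Finset.sum_pair (f := fun h => (hyperplaneCount K h : ℚ)⁻¹) (hf.ne hH₁ hH₂ hne)).symm
      _ ≤ _ := Finset.sum_le_sum_of_subset_of_nonneg hsub fun h _ _ => hnonneg h

theorem mul_card_sparseHyperplanes_le (hV : finrank F V = 5) (hq : 4 ≤ q)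
    (hK : q ^ 3 ≤ K.card + 2 * q ^ 2) :
    ((q : ℤ) ^ 2 * (q - 4)) ^ 2 * (sparseHyperplanes K).card ≤ K.card * q ^ 5 := by
  have hq' : (4 : ℤ) ≤ q := mod_cast hq
  have hK' : (q : ℤ) ^ 3 ≤ K.card + 2 * q ^ 2 := mod_cast hK
  have hdev : ∀ h ∈ sparseHyperplanes K,
      ((q : ℤ) ^ 2 * (q - 4)) ^ 2 ≤ (q * hyperplaneCount K h - K.card) ^ 2 := by
    intro h hh
    have hx : (5 : ℤ) * hyperplaneCount K h ≤ 8 * q + 5 := mod_cast mem_sparseHyperplanes.mp hh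
    rw [← neg_sub (K.card : ℤ), neg_sq]
    exact pow_le_pow_left₀ (mul_nonneg (sq_nonneg _) (sub_nonneg.mpr hq')) (by nlinarith [hK']) 2
  calc ((q : ℤ) ^ 2 * (q - 4)) ^ 2 * (sparseHyperplanes K).card
      = ∑ _h ∈ sparseHyperplanes K, ((q : ℤ) ^ 2 * (q - 4)) ^ 2 := by
        rw [Finset.sum_const, nsmul_eq_mul, mul_comm]
    _ ≤ ∑ h ∈ sparseHyperplanes K, (q * hyperplaneCount K h - K.card : ℤ) ^ 2 :=
        Finset.sum_le_sum hdev
    _ ≤ ∑ h, (q * hyperplaneCount K h - K.card : ℤ) ^ 2 :=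
        Finset.sum_le_univ_sum_of_nonneg fun h => sq_nonneg _
    _ = K.card * q ^ 5 - (q - 1) * (K.card : ℤ) ^ 2 := sum_sq_hyperplaneCount_sub (n := 3) hV K
    _ ≤ K.card * q ^ 5 := sub_le_self _ (mul_nonneg (by linarith) (sq_nonneg _))

theorem NoThreeCollinear.hyperplaneCount_eq_of_tangentLines_eq_empty
    (hK : NoThreeCollinear K) (hV : finrank F V = 5) (hP : P ∈ K) (hT : tangentLines K P = ∅)
    {h : ℙ F (Dual F V)} (hPh : P.rep ∈ LinearMap.ker h.rep) :
    hyperplaneCount K h = q ^ 2 + q + 2 := by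
  have hcomap : ((LinearMap.ker h.rep).map P.submodule.mkQ).comap P.submodule.mkQ =
      LinearMap.ker h.rep :=
    Submodule.comap_map_eq_self (P.submodule.ker_mkQ.trans_le (submodule_le_iff.mpr hPh))
  have hker := Dual.finrank_ker_add_one_of_ne_zero h.rep_nonzero
  rw [← hcomap, finrank_comap_mkQ, P.finrank_submodule] at hker
  rw [hyperplaneCount, ← hcomap, hK.card_inter_points_comap hP, hT, Finset.sdiff_empty,
    card_points (n := 3) (by omega)]
  simp only [Finset.sum_range_succ, Finset.sum_range_zero]
  ring

theorem NoThreeCollinear.card_tangentLines_add_card_of_finrank_eq_five (hK : NoThreeCollinear K)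
    (hV : finrank F V = 5) (hP : P ∈ K) :
    (tangentLines K P).card + K.card = q ^ 3 + q ^ 2 + q + 2 := by
  rw [hK.card_tangentLines_add_card (n := 4) hP hV]
  simp only [Finset.sum_range_succ, Finset.sum_range_zero]
  ring

theorem NoThreeCollinear.card_ne (hK : NoThreeCollinear K) (hV : finrank F V = 5) (hq : 3 ≤ q) :
    K.card ≠ q ^ 3 + q ^ 2 + q + 2 := by
  intro hcard
  have hT : ∀ P ∈ K, tangentLines K P = ∅ := fun P hP => by
    have := hK.card_tangentLines_add_card_of_finrank_eq_five hV hP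
    exact Finset.card_eq_zero.mp (by omega)
  have hdvd : q ^ 2 + q + 2 ∣ ∑ h, hyperplaneCount K h := Finset.dvd_sum fun h _ => by
    rcases (K ∩ points (LinearMap.ker h.rep)).eq_empty_or_nonempty with hempty | ⟨P, hP⟩
    · rw [hyperplaneCount, hempty, Finset.card_empty]
      exact dvd_zero _
    · rw [Finset.mem_inter, mem_points] at hP
      exact (hK.hyperplaneCount_eq_of_tangentLines_eq_empty hV hP.1 (hT P hP.1) hP.2).symm.dvd
  have hmul : ∑ h, hyperplaneCount K h + 4 * q = (q ^ 2 + q + 2) * (q ^ 4 + q ^ 3 + 3 * q + 1) := by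
    rw [sum_hyperplaneCount (n := 4) hV, hcard]
    simp only [Finset.sum_range_succ, Finset.sum_range_zero]
    ring
  have hle := Nat.le_of_dvd (by omega) ((Nat.dvd_add_right hdvd).mp (hmul ▸ dvd_mul_right _ _))
  nlinarith

theorem NoThreeCollinear.card_add_lt_of_secantsCover [CharP F 2] (hK : NoThreeCollinear K)
    (hcov : SecantsCover K) (hV : finrank F V = 5) (hq : 1024 ≤ q) :
    K.card + 2 * q ^ 2 < q ^ 3 + 101 * q + 2 := by
  by_contra! hlarge
  have hsparse : 6 / (5 * (q : ℚ)) * K.card ≤ (sparseHyperplanes K).card := by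
    refine card_mul_le_card_of_le_sum_inv fun P hP => ?_
    have hcard := hK.card_tangentLines_add_card_of_finrank_eq_five hV hP
    have hne := hK.card_ne hV (by omega)
    exact hK.le_sum_sparseHyperplanes_inv hcov hV hq hP (Finset.card_pos.mp (by omega)) (by omega)
  have hvar : ((q : ℚ) ^ 2 * (q - 4)) ^ 2 * (sparseHyperplanes K).card ≤ K.card * q ^ 5 :=
    mod_cast mul_card_sparseHyperplanes_le (K := K) hV (by omega) (by omega)
  have hq' : (1024 : ℚ) ≤ q := mod_cast hq
  have hpos : (0 : ℚ) < K.card * q ^ 3 := by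
    have : 0 < K.card := by nlinarith
    positivity
  have hscaled := (mul_le_mul_of_nonneg_left hsparse (sq_nonneg ((q : ℚ) ^ 2 * (q - 4)))).trans hvar
  have hsq : 6 * ((q : ℚ) - 4) ^ 2 ≤ 5 * q ^ 2 := by
    rw [← mul_le_mul_iff_right₀ hpos]
    field_simp at hscaled
    nlinarith
  nlinarith

theorem NoThreeCollinear.card_add_lt [CharP F 2] (hK : NoThreeCollinear K)
    (hV : finrank F V = 5) (hq : 1024 ≤ q) : K.card + 2 * q ^ 2 < q ^ 3 + 101 * q + 2 := by
  obtain ⟨M, hKM, hM⟩ := Finite.exists_le_maximal hK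
  have := hM.prop.card_add_lt_of_secantsCover (secantsCover_of_maximal hM) hV hq
  have := Finset.card_le_card hKM
  omega

end LargeCaps

section Caps

variable {F : Type*} [Field F] {n : ℕ}

theorem coll3_iff_rep_mem_lineThrough {P₁ P₂ P₃ : PGPoint F n} (h : P₂ ≠ P₃) :
    Coll3 P₁ P₂ P₃ ↔ P₁.rep ∈ lineThrough P₂ P₃ := by
  have hline : P₂.submodule ⊔ P₃.submodule = lineThrough P₂ P₃ := by
    rw [lineThrough, Submodule.span_insert, ← P₂.submodule_eq, ← P₃.submodule_eq]
  rw [Coll3, sup_assoc, hline, ← submodule_le_iff]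
  constructor
  · intro hle
    rw [← finrank_lineThrough h] at hle
    exact le_sup_left.trans (Submodule.eq_of_le_of_finrank_le le_sup_right hle).ge
  · intro hle
    rw [sup_eq_right.mpr hle, finrank_lineThrough h]

theorem isCap_coe_iff {K : Finset (PGPoint F n)} :
    IsCap (K : Set (PGPoint F n)) ↔ NoThreeCollinear K := by
  simp only [IsCap, NoThreeCollinear, Finset.mem_coe]
  refine forall₂_congr fun x _ => forall₂_congr fun y _ => forall₂_congr fun z _ =>
    imp_congr_right fun _ => imp_congr_right fun _ => forall_congr' fun hyz => ?_
  rw [coll3_iff_rep_mem_lineThrough hyz]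

end Caps

theorem stmt0_general (F : Type*) [Field F] [Fintype F] (q : ℕ) (hcard : Fintype.card F = q)
    (hqeven : Even q) (hq : 1024 ≤ q) (K : Set (PGPoint F 4)) (hK : IsCap K) :
    K.ncard + 2 * q ^ 2 < q ^ 3 + 101 * q + 2 := by
  subst hcard
  have : CharP F 2 :=
    ringChar.of_eq (FiniteField.even_card_iff_char_two.mpr (Nat.even_iff.mp hqeven))
  lift K to Finset (PGPoint F 4) using K.toFinite
  rw [Set.ncard_coe_finset]
  exact (isCap_coe_iff.mp hK).card_add_lt (finrank_fin_fun F) hq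

theorem stmt0 (F : Type*) [Field F] [Fintype F] (q : ℕ) (hcard : Fintype.card F = q)
    (hqeven : Even q) (hq : 2048 ≤ q)
    (K : Set (PGPoint F 4)) (hK : IsCap K) :
    (K.ncard : ℝ) < (q : ℝ) ^ 3 - 2 * (q : ℝ) ^ 2 + 3 * (q : ℝ) * Real.sqrt q + 8 * (q : ℝ) - 9 * Real.sqrt q - 6 := by
  have hgeneral : (K.ncard : ℝ) + 2 * q ^ 2 < q ^ 3 + 101 * q + 2 :=
    mod_cast stmt0_general F q hcard hqeven (by omega) K hK
  have hq' : (2048 : ℝ) ≤ q := mod_cast hq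
  have hroot : 45 ≤ √(q : ℝ) := Real.le_sqrt_of_sq_le (by linarith)
  have hlinear : 101 * (q : ℝ) + 2 ≤ 3 * q * √q + 8 * q - 9 * √q - 6 := by nlinarith
  linarith
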